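/- Assume additionally that c_j ≠ c for all 1 < j < l. Set r := #{i : c_i > c} and s := (Σ_{i : c_i ≤ c} c_i) − 2c. For a point ξ : P → ℂ let X(ξ) denote the complex n×n matrix whose (a,b) entry is ξ(a,b) for (a,b) ∈ P and 0 otherwise. Then the vanishing ideal in R of the set V := { ξ : P → ℂ | rank(X(ξ)^{r+1}) = s + c − 1 } is the principal ideal generated by the Benlolo–Sanderson element f. (This is the Benlolo–Sanderson conjecture: the ideal of definition of the hypersurface orbital variety closure in the nilradical m is generated by f.) -/

import Mathlib

open Finset MvPolynomial

noncomputable section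

/-- Sum of the first `j` block sizes (blocks are 1-indexed). -/
def blkSum (c : ℕ → ℕ) (j : ℕ) : ℕ := ∑ i ∈ Finset.Icc 1 j, c i

/-- Block index of `a ∈ {1,…,n}`: the least `j` with `a ≤ c 1 + ⋯ + c j`. -/
def blk (c : ℕ → ℕ) (a : ℕ) : ℕ := sInf {j | a ≤ blkSum c j}

/-- The index set `P` of positions of the nilradical `m`: pairs `(a, b)` of indices
(0-indexed here, representing the 1-indexed pair `(a+1, b+1)`) with `b < a` and
`blk (b+1) < blk (a+1)`. -/
abbrev Pos (c : ℕ → ℕ) (n : ℕ) : Type :=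
  {p : Fin n × Fin n // p.2 < p.1 ∧ blk c (p.2.1 + 1) < blk c (p.1.1 + 1)}

/-- The generic matrix `𝒳` of the nilradical `m`. -/
def genX (c : ℕ → ℕ) (n : ℕ) : Matrix (Fin n) (Fin n) (MvPolynomial (Pos c n) ℂ) :=
  Matrix.of fun a b =>
    if h : b < a ∧ blk c (b.1 + 1) < blk c (a.1 + 1) then X (⟨(a, b), h⟩ : Pos c n) else 0

/-- The matrix `M(t)`: the `(n-c) × (n-c)` submatrix of `𝒳 + t · Id` consisting of
rows `c+1, …, n` and columns `1, …, n-c`, viewed over `R[t]`.  Here `m = n - c`. -/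
def Mmat (c : ℕ → ℕ) (n m : ℕ) (h : m + c 1 = n) :
    Matrix (Fin m) (Fin m) (Polynomial (MvPolynomial (Pos c n) ℂ)) :=
  Matrix.of fun i j =>
    Polynomial.C (genX c n (Fin.cast h (i.addNat (c 1)))
        (Fin.castLE (le_trans (Nat.le_add_right m (c 1)) (le_of_eq h)) j))
      + if (Fin.cast h (i.addNat (c 1)) : Fin n)
            = Fin.castLE (le_trans (Nat.le_add_right m (c 1)) (le_of_eq h)) j
        then Polynomial.X else 0

/-- `d := Σᵢ max (cᵢ - c, 0)` (truncated subtraction). -/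
def dBS (c : ℕ → ℕ) (l : ℕ) : ℕ := ∑ i ∈ Finset.Icc 1 l, (c i - c 1)

/-- The Benlolo–Sanderson element: the coefficient of `t^d` in `det M(t)`. -/
def BSf (c : ℕ → ℕ) (l n m : ℕ) (h : m + c 1 = n) : MvPolynomial (Pos c n) ℂ :=
  ((Mmat c n m h).det).coeff (dBS c l)

/-- The point of the nilradical determined by `ξ : P → ℂ`. -/
def Xpt (c : ℕ → ℕ) (n : ℕ) (ξ : Pos c n → ℂ) : Matrix (Fin n) (Fin n) ℂ :=
  Matrix.of fun a b =>
    if h : b < a ∧ blk c (b.1 + 1) < blk c (a.1 + 1) then ξ ⟨(a, b), h⟩ else 0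

/-!
Let `X` be a point of the nilradical and `D` a matrix of rank at most `c`. Expanding
`det (t + X - D)` along the columns of `X` and `D` and counting the diagonal entries `t` in each
term, one finds that the coefficients of `det (t + X - D)` below `t ^ d` vanish, and that the
coefficient of `t ^ d` is, up to sign, `f` times the upper right `c × c` corner minor of `D`. Hence
`f ξ ≠ 0` if and only if some such `D` gives a nonzero coefficient at `t ^ d`, and an analysis of
the Jordan type of `X` shows that this means `s + c ≤ rank (X ^ (r + 1))`.

Every factor of `f` is homogeneous for the weights of the diagonal torus. Since `f` does not vanish
at the sums of chains of elementary matrices given by arranging the indices in rows, these weights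
are very restricted, and it follows that `f` is irreducible. Finally, some zero of `f` has
`rank (X ^ (r + 1)) = s + c - 1`. The rank being lower semicontinuous, a polynomial vanishing on `V`
vanishes on a nonempty open subset of the irreducible hypersurface `f = 0`, so `f` divides it.
-/

section StableSubmodules

variable {R M : Type*} [Semiring R] [AddCommMonoid M] [Module R M]

lemma submodule_map_pow_succ (f : Module.End R M) (P : Submodule R M) (k : ℕ) :
    P.map (f ^ (k + 1)) = (P.map f).map (f ^ k) := by
  rw [pow_succ, Module.End.mul_eq_comp, Submodule.map_comp]

lemma submodule_map_pow_succ' (f : Module.End R M) (P : Submodule R M) (k : ℕ) :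
    P.map (f ^ (k + 1)) = (P.map (f ^ k)).map f := by
  rw [pow_succ', Module.End.mul_eq_comp, Submodule.map_comp]

lemma range_pow_succ (f : Module.End R M) (k : ℕ) :
    LinearMap.range (f ^ (k + 1)) = (LinearMap.range f).map (f ^ k) := by
  rw [pow_succ, Module.End.mul_eq_comp, LinearMap.range_comp]

lemma range_pow_succ' (f : Module.End R M) (k : ℕ) :
    LinearMap.range (f ^ (k + 1)) = (LinearMap.range (f ^ k)).map f := by
  rw [pow_succ', Module.End.mul_eq_comp, LinearMap.range_comp]

variable {f : Module.End R M} {P Q : Submodule R M}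

lemma map_pow_le_self (hP : P.map f ≤ P) : ∀ k : ℕ, P.map (f ^ k) ≤ P
  | 0 => by rw [pow_zero, Module.End.one_eq_id, Submodule.map_id]
  | k + 1 => by
    rw [submodule_map_pow_succ]
    exact (Submodule.map_mono hP).trans (map_pow_le_self hP k)

-- Nakayama's lemma for the nilpotent action of `f`.
lemma le_of_le_sup_map (hf : IsNilpotent f) (hQ : Q.map f ≤ Q) (hP : P ≤ Q ⊔ P.map f) :
    P ≤ Q := by
  have hpow (k : ℕ) : P ≤ Q ⊔ P.map (f ^ k) := by
    induction k with
    | zero => rw [pow_zero, Module.End.one_eq_id, Submodule.map_id]; exact le_sup_right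
    | succ k ih =>
      calc P ≤ Q ⊔ P.map (f ^ k) := ih
        _ ≤ Q ⊔ (Q ⊔ P.map f).map (f ^ k) := sup_le_sup_left (Submodule.map_mono hP) _
        _ = Q ⊔ Q.map (f ^ k) ⊔ P.map (f ^ (k + 1)) := by
          rw [Submodule.map_sup, ← submodule_map_pow_succ, sup_assoc]
        _ ≤ Q ⊔ P.map (f ^ (k + 1)) := sup_le_sup_right (sup_le le_rfl (map_pow_le_self hQ k)) _
  obtain ⟨k, hk⟩ := hf
  simpa [hk] using hpow k

lemma disjoint_ker_pow (hP : P.map f ≤ P) (hdisj : Disjoint P (LinearMap.ker f)) (k : ℕ) :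
    Disjoint P (LinearMap.ker (f ^ k)) := by
  rw [Submodule.disjoint_def] at hdisj ⊢
  intro v hv hker
  rw [LinearMap.mem_ker] at hker
  induction k generalizing v with
  | zero => simpa using hker
  | succ k ih =>
    rw [pow_succ, Module.End.mul_apply] at hker
    exact hdisj v hv (ih (f v) (hP (Submodule.mem_map_of_mem hv)) hker)

end StableSubmodules

section NilpotentEndomorphisms

variable {K V : Type*} [Field K] [AddCommGroup V] [Module K V]

open Module

lemma range_pow_le_map_sup {f : End K V} {k : ℕ} {G : Submodule K V}
    (hG : Codisjoint (LinearMap.range f ⊔ LinearMap.ker (f ^ k)) G) :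
    LinearMap.range (f ^ k) ≤ G.map (f ^ k) ⊔ (LinearMap.range (f ^ k)).map f := by
  rw [← range_pow_succ', range_pow_succ, LinearMap.range_eq_map (f ^ k), ← hG.eq_top,
    Submodule.map_sup, Submodule.map_sup, LinearMap.le_ker_iff_map.1 le_rfl, sup_bot_eq,
    sup_comm]

variable [FiniteDimensional K V]

lemma finrank_map_add_finrank_inf_ker (f : End K V) (P : Submodule K V) :
    finrank K (P.map f) + finrank K (P ⊓ LinearMap.ker f : Submodule K V) = finrank K P := by
  rw [← LinearMap.finrank_range_add_finrank_ker (f.domRestrict P), LinearMap.range_domRestrict,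
    LinearMap.ker_domRestrict, ← P.map_comap_subtype,
    (P.equivSubtypeMap ((LinearMap.ker f).comap P.subtype)).finrank_eq]

-- The dimensions of `P`, `f P`, `f² P` form a convex sequence.
lemma two_mul_finrank_map_le {f : End K V} {P : Submodule K V} (hP : P.map f ≤ P) :
    2 * finrank K (P.map f) ≤ finrank K P + finrank K ((P.map f).map f) := by
  have hker := Submodule.finrank_mono (inf_le_inf_right (LinearMap.ker f) hP)
  have hPf := finrank_map_add_finrank_inf_ker f P
  have hPff := finrank_map_add_finrank_inf_ker f (P.map f)
  omega

lemma finrank_map_pow_add_mul_le {f : End K V} {P : Submodule K V} (hP : P.map f ≤ P) {c : ℕ} :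
    ∀ k : ℕ, finrank K (P.map (f ^ (k + 1))) + c ≤ finrank K (P.map (f ^ k)) →
      finrank K (P.map (f ^ k)) + k * c ≤ finrank K P
  | 0, _ => by rw [zero_mul]; exact Submodule.finrank_mono (map_pow_le_self hP 0)
  | k + 1, hdrop => by
    have hstable : (P.map (f ^ k)).map f ≤ P.map (f ^ k) := by
      rw [← submodule_map_pow_succ', submodule_map_pow_succ]
      exact Submodule.map_mono hP
    have hconvex := two_mul_finrank_map_le hstable
    rw [← submodule_map_pow_succ', ← submodule_map_pow_succ'] at hconvex
    have ih := finrank_map_pow_add_mul_le hP (c := c) k (by omega)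
    rw [add_one_mul]
    omega

lemma finrank_le_finrank_map_pow_add {f : End K V} {P : Submodule K V} (hP : P.map f ≤ P) (k : ℕ) :
    finrank K P ≤
      finrank K (P.map (f ^ k)) + k * finrank K (P ⊓ LinearMap.ker f : Submodule K V) := by
  induction k with
  | zero => rw [pow_zero, End.one_eq_id, Submodule.map_id]; exact Nat.le_add_right _ _
  | succ k ih =>
    have hker := Submodule.finrank_mono (inf_le_inf_right (LinearMap.ker f) (map_pow_le_self hP k))
    have hmap := finrank_map_add_finrank_inf_ker f (P.map (f ^ k))
    rw [submodule_map_pow_succ', Nat.succ_mul]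
    omega

lemma finrank_add_finrank_range_pow_succ {f : End K V} {k : ℕ} {G : Submodule K V}
    (hG : IsCompl (LinearMap.range f ⊔ LinearMap.ker (f ^ k)) G) :
    finrank K G + finrank K (LinearMap.range (f ^ (k + 1))) =
      finrank K (LinearMap.range (f ^ k)) := by
  have himage : (LinearMap.range f ⊔ LinearMap.ker (f ^ k)).map (f ^ k) =
      LinearMap.range (f ^ (k + 1)) := by
    rw [Submodule.map_sup, LinearMap.le_ker_iff_map.1 le_rfl, sup_bot_eq, range_pow_succ]
  have hsplit := finrank_map_add_finrank_inf_ker (f ^ k)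
    (LinearMap.range f ⊔ LinearMap.ker (f ^ k))
  rw [himage, inf_of_le_right le_sup_right] at hsplit
  have hcompl := Submodule.finrank_add_eq_of_isCompl hG
  have hnullity := (f ^ k).finrank_range_add_finrank_ker
  omega

-- `P` is generated as a `K[f]`-module by a complement of `range f ⊔ ker (f ^ k)`.
lemma exists_stable_range_pow_le_map {f : End K V} (hf : IsNilpotent f) (k : ℕ) :
    ∃ P : Submodule K V, P.map f ≤ P ∧ LinearMap.range (f ^ k) ≤ P.map (f ^ k) ∧
      finrank K P + finrank K (LinearMap.range (f ^ (k + 1))) ≤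
        finrank K (P.map f) + finrank K (LinearMap.range (f ^ k)) := by
  obtain ⟨G, hG⟩ := Submodule.exists_isCompl (LinearMap.range f ⊔ LinearMap.ker (f ^ k))
  let P : Submodule K V := ⨆ j : ℕ, G.map (f ^ j)
  have hGP : G ≤ P := by
    simpa [Module.End.one_eq_id] using le_iSup (fun j : ℕ => G.map (f ^ j)) 0
  have hPf : P.map f ≤ P := by
    rw [Submodule.map_iSup]
    refine iSup_le fun j => ?_
    rw [← submodule_map_pow_succ']
    exact le_iSup (fun j : ℕ => G.map (f ^ j)) (j + 1)
  have hPG : P ≤ G ⊔ P.map f := by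
    refine iSup_le fun j => ?_
    cases j with
    | zero => simp [Module.End.one_eq_id]
    | succ j =>
      rw [submodule_map_pow_succ']
      exact le_sup_of_le_right
        (Submodule.map_mono (le_iSup (fun j : ℕ => G.map (f ^ j)) j))
  refine ⟨P, hPf, le_of_le_sup_map hf ?_ ((range_pow_le_map_sup hG.codisjoint).trans
    (sup_le_sup_right (Submodule.map_mono hGP) _)), ?_⟩
  · rw [← submodule_map_pow_succ', submodule_map_pow_succ]
    exact Submodule.map_mono hPf
  · have hdim := (Submodule.finrank_mono hPG).trans
      (Submodule.finrank_add_le_finrank_add_finrank G (P.map f))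
    have hGdim := finrank_add_finrank_range_pow_succ hG
    omega

-- The perturbation sends `P ⊓ ker f` isomorphically onto a complement of `f P` in `P`.
lemma exists_perturbation_disjoint_ker {f : End K V} {P : Submodule K V} {c : ℕ}
    (hP : P.map f ≤ P) (hc : finrank K P ≤ finrank K (P.map f) + c) :
    ∃ D : End K V, finrank K (LinearMap.range D) ≤ c ∧ P.map (f + D) ≤ P ∧
      Disjoint P (LinearMap.ker (f + D)) := by
  obtain ⟨G, hdisj, hsup⟩ := IsModularLattice.exists_disjoint_and_sup_eq hP
  have hker := finrank_map_add_finrank_inf_ker f P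
  have hfinrank : finrank K (P ⊓ LinearMap.ker f : Submodule K V) = finrank K G := by
    have hsum := Submodule.finrank_sup_add_finrank_inf_eq (P.map f) G
    rw [hsup, hdisj.eq_bot, finrank_bot] at hsum
    omega
  let e := LinearEquiv.ofFinrankEq _ _ hfinrank
  obtain ⟨p, hp⟩ := (P ⊓ LinearMap.ker f).subtype.exists_leftInverse_of_injective
    (Submodule.ker_subtype _)
  let D : End K V := G.subtype ∘ₗ e.toLinearMap ∘ₗ p
  have hDG (v : V) : D v ∈ G := (e (p v)).2
  refine ⟨D, ?_, ?_, Submodule.disjoint_def.2 fun v hv hfD => ?_⟩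
  · have hrange : LinearMap.range D ≤ G := by rintro _ ⟨v, rfl⟩; exact hDG v
    exact (Submodule.finrank_mono hrange).trans (by omega)
  · rintro _ ⟨v, hv, rfl⟩
    exact P.add_mem (hP (Submodule.mem_map_of_mem hv)) (hsup ▸ Submodule.mem_sup_right (hDG v))
  · have hsum : f v + D v = 0 := hfD
    have hDv : D v = 0 := Submodule.disjoint_def.1 hdisj _
      (neg_eq_of_add_eq_zero_right hsum ▸ neg_mem (Submodule.mem_map_of_mem hv)) (hDG v)
    have hfv : f v = 0 := by simpa [hDv] using hsum
    have hpv : p v = ⟨v, hv, hfv⟩ := LinearMap.congr_fun hp ⟨v, hv, hfv⟩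
    have hepv : e (p v) = 0 := Subtype.ext hDv
    exact congrArg Subtype.val (e.map_eq_zero_iff.1 (hpv ▸ hepv))

lemma exists_perturbation_of_finrank_range_pow {f : End K V} (hf : IsNilpotent f) {c k s : ℕ}
    (hk : finrank K (LinearMap.range (f ^ k)) ≤ s + 2 * c)
    (hk₁ : s + c ≤ finrank K (LinearMap.range (f ^ (k + 1))))
    (hk₂ : finrank K (LinearMap.range (f ^ (k + 2))) ≤ s) :
    ∃ D : End K V, finrank K (LinearMap.range D) ≤ c ∧ ∃ P : Submodule K V,
      P.map (f + D) ≤ P ∧ Disjoint P (LinearMap.ker (f + D)) ∧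
        s + c + (k + 1) * c ≤ finrank K P := by
  obtain ⟨P, hPf, hrange, hPdim⟩ := exists_stable_range_pow_le_map hf (k + 1)
  have hconvex := two_mul_finrank_map_le (f := f) (P := LinearMap.range (f ^ k)) (by
    rw [← range_pow_succ', range_pow_succ]; exact LinearMap.map_le_range)
  rw [← range_pow_succ', ← range_pow_succ', add_assoc k, one_add_one_eq_two] at hconvex
  rw [add_assoc k, one_add_one_eq_two] at hPdim
  obtain ⟨D, hD, hPD, hdisj⟩ := exists_perturbation_disjoint_ker (c := c) hPf (by omega)
  refine ⟨D, hD, P, hPD, hdisj, ?_⟩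
  have hle := Submodule.finrank_mono (LinearMap.map_le_range (f := f ^ (k + 2)) (p := P))
  have hge := Submodule.finrank_mono hrange
  have hdim := finrank_map_pow_add_mul_le hPf (c := c) (k + 1) (by
    rw [add_assoc k, one_add_one_eq_two]; omega)
  omega

lemma charpoly_coeff_eq_zero_of_finrank_range_pow_add_lt {f : End K V} {d k : ℕ}
    (h : finrank K (LinearMap.range (f ^ k)) + d < finrank K V) : f.charpoly.coeff d = 0 := by
  have hker : LinearMap.ker (f ^ k) ≤ f.maxGenEigenspace 0 := fun v hv =>
    (End.mem_maxGenEigenspace f 0 v).2 ⟨k, by simpa using hv⟩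
  have hnullity := (f ^ k).finrank_range_add_finrank_ker
  have hle := Submodule.finrank_mono hker
  rw [LinearMap.finrank_maxGenEigenspace_zero_eq] at hle
  exact Polynomial.coeff_eq_zero_of_lt_natTrailingDegree (by omega)

lemma charpoly_coeff_ne_zero_of_disjoint_ker {f : End K V} {P : Submodule K V} {d : ℕ}
    (hP : P.map f ≤ P) (hdisj : Disjoint P (LinearMap.ker f))
    (hdim : finrank K V ≤ finrank K P + d) (hdvd : Polynomial.X ^ d ∣ f.charpoly) :
    f.charpoly.coeff d ≠ 0 := by
  have hgen : Disjoint P (f.maxGenEigenspace 0) := by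
    refine Submodule.disjoint_def.2 fun v hv hmem => ?_
    obtain ⟨k, hk⟩ := (End.mem_maxGenEigenspace f 0 v).1 hmem
    exact Submodule.disjoint_def.1 (disjoint_ker_pow hP hdisj k) v hv (by simpa using hk)
  have hle := Submodule.finrank_add_finrank_le_of_disjoint hgen
  rw [LinearMap.finrank_maxGenEigenspace_zero_eq] at hle
  have hge : d ≤ f.charpoly.natTrailingDegree :=
    Polynomial.le_natTrailingDegree f.charpoly_monic.ne_zero (Polynomial.X_pow_dvd_iff.1 hdvd)
  rw [show d = f.charpoly.natTrailingDegree by omega]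
  exact Polynomial.trailingCoeff_nonzero_iff_nonzero.2 f.charpoly_monic.ne_zero

end NilpotentEndomorphisms

section MatrixRank

variable {K n : Type*} [Field K] [Fintype n]

lemma rank_add_le_rank_add_rank (A B : Matrix n n K) : (A + B).rank ≤ A.rank + B.rank := by
  have h := LinearMap.rank_add_le A.mulVecLin B.mulVecLin
  rw [← Matrix.mulVecLin_add] at h
  simp only [LinearMap.rank, ← Module.finrank_eq_rank] at h
  exact_mod_cast h

lemma exists_mul_mul_eq_one (A : Matrix n n K) :
    ∃ (B : Matrix (Fin A.rank) n K) (C : Matrix n (Fin A.rank) K), B * A * C = 1 := by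
  classical
  let e : (Fin A.rank → K) ≃ₗ[K] LinearMap.range (Matrix.toLin' A) :=
    LinearEquiv.ofFinrankEq _ _ (Module.finrank_fin_fun K)
  obtain ⟨p, hp⟩ := (LinearMap.range (Matrix.toLin' A)).subtype.exists_leftInverse_of_injective
    (Submodule.ker_subtype _)
  obtain ⟨q, hq⟩ := (Matrix.toLin' A).rangeRestrict.exists_rightInverse_of_surjective
    (LinearMap.range_rangeRestrict _)
  refine ⟨LinearMap.toMatrix' (e.symm.toLinearMap ∘ₗ p),
    LinearMap.toMatrix' (q ∘ₗ e.toLinearMap), ?_⟩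
  have hcomp : (e.symm.toLinearMap ∘ₗ p) ∘ₗ Matrix.toLin' A ∘ₗ q ∘ₗ e.toLinearMap =
      LinearMap.id := by
    refine LinearMap.ext fun v => ?_
    have hqe : Matrix.toLin' A (q (e v)) = e v :=
      congrArg Subtype.val (LinearMap.congr_fun hq (e v))
    have hpe : p (e v) = e v := LinearMap.congr_fun hp (e v)
    simp [hqe, hpe]
  simpa [LinearMap.toMatrix'_comp, Matrix.mul_assoc] using congrArg LinearMap.toMatrix' hcomp

-- Lower semicontinuity of the rank in the Zariski topology.
lemma exists_eval_ne_zero_rank_le {σ : Type*} (M : Matrix n n (MvPolynomial σ K)) (ξ₀ : σ → K) :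
    ∃ q : MvPolynomial σ K, eval ξ₀ q ≠ 0 ∧
      ∀ ξ, eval ξ q ≠ 0 → (M.map (eval ξ₀)).rank ≤ (M.map (eval ξ)).rank := by
  obtain ⟨B, D, hBD⟩ := exists_mul_mul_eq_one (M.map (eval ξ₀))
  let q : MvPolynomial σ K :=
    ((B.map C : Matrix _ _ (MvPolynomial σ K)) * M * (D.map C : Matrix _ _ (MvPolynomial σ K))).det
  have hq (ξ : σ → K) : eval ξ q = (B * M.map (eval ξ) * D).det := by
    simp [q, RingHom.map_det, Matrix.map_mul, Matrix.map_map, Function.comp_def]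
  refine ⟨q, by simp [hq, hBD], fun ξ hξ => ?_⟩
  rw [hq] at hξ
  calc (M.map (eval ξ₀)).rank
      = (B * M.map (eval ξ) * D).rank := by
        rw [Matrix.rank_of_isUnit _ ((Matrix.isUnit_iff_isUnit_det _).2 hξ.isUnit),
          Fintype.card_fin]
    _ ≤ (B * M.map (eval ξ)).rank := Matrix.rank_mul_le_left _ _
    _ ≤ (M.map (eval ξ)).rank := Matrix.rank_mul_le_right _ _

lemma rank_neg (A : Matrix n n K) : (-A).rank = A.rank := by
  classical
  rw [← neg_one_smul K, Matrix.rank_smul_of_mem_nonZeroDivisors _ (by simp)]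

variable [DecidableEq n]

lemma rank_pow_eq_finrank_range_toLin' (A : Matrix n n K) (k : ℕ) :
    (A ^ k).rank = Module.finrank K (LinearMap.range (Matrix.toLin' A ^ k)) := by
  rw [← Matrix.toLin'_pow]
  rfl

lemma rank_neg_pow (A : Matrix n n K) (k : ℕ) : ((-A) ^ k).rank = (A ^ k).rank := by
  rcases k.even_or_odd with h | h
  · rw [h.neg_pow]
  · rw [h.neg_pow, rank_neg]

lemma rank_add_pow_le (A D : Matrix n n K) (k : ℕ) :
    ((A + D) ^ k).rank ≤ (A ^ k).rank + k * D.rank := by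
  have hdiff : ∀ k : ℕ, ((A + D) ^ k - A ^ k).rank ≤ k * D.rank := by
    intro k
    induction k with
    | zero => simp
    | succ k ih =>
      calc ((A + D) ^ (k + 1) - A ^ (k + 1)).rank
          = (((A + D) ^ k - A ^ k) * A + (A + D) ^ k * D).rank := by
            rw [pow_succ, pow_succ, mul_add, sub_mul]; congr 1; abel
        _ ≤ (((A + D) ^ k - A ^ k) * A).rank + ((A + D) ^ k * D).rank :=
            rank_add_le_rank_add_rank _ _
        _ ≤ k * D.rank + D.rank :=
            add_le_add ((Matrix.rank_mul_le_left _ _).trans ih) (Matrix.rank_mul_le_right _ _)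
        _ = (k + 1) * D.rank := (add_one_mul _ _).symm
  calc ((A + D) ^ k).rank = (A ^ k + ((A + D) ^ k - A ^ k)).rank := by rw [add_sub_cancel]
    _ ≤ (A ^ k).rank + ((A + D) ^ k - A ^ k).rank := rank_add_le_rank_add_rank _ _
    _ ≤ (A ^ k).rank + k * D.rank := Nat.add_le_add_left (hdiff k) _

end MatrixRank

section Nullstellensatz

variable {K σ : Type*} [Field K] [IsAlgClosed K] [Finite σ]

lemma dvd_of_forall_eval_eq_zero {f g q : MvPolynomial σ K} (hf : Prime f) {ξ₀ : σ → K}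
    (hfξ₀ : eval ξ₀ f = 0) (hqξ₀ : eval ξ₀ q ≠ 0)
    (hg : ∀ ξ, eval ξ f = 0 → eval ξ q ≠ 0 → eval ξ g = 0) : f ∣ g := by
  have : (Ideal.span {f}).IsPrime := (Ideal.span_singleton_prime hf.ne_zero).2 hf
  have hgq : g * q ∈ Ideal.span {f} := by
    rw [← MvPolynomial.IsPrime.vanishingIdeal_zeroLocus (K := K) (Ideal.span {f}),
      mem_vanishingIdeal_iff]
    intro ξ hξ
    have hfξ : eval ξ f = 0 := by
      simpa [aeval_eq_eval] using hξ f (Ideal.mem_span_singleton_self f)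
    rw [aeval_eq_eval, map_mul, mul_eq_zero]
    exact or_iff_not_imp_right.2 (hg ξ hfξ)
  refine (hf.dvd_or_dvd (Ideal.mem_span_singleton.1 hgq)).resolve_right ?_
  rintro ⟨u, rfl⟩
  exact hqξ₀ (by rw [map_mul, hfξ₀, zero_mul])

end Nullstellensatz

section CoordinateFlag

variable {K n : Type*}

section Semiring

variable [Semiring K]

/-- The subspace of `n → K` spanned by the coordinate vectors indexed by `T`. -/
def coordSubspace (K : Type*) [Semiring K] (T : Finset n) : Submodule K (n → K) :=
  ⨅ a ∈ (T : Set n)ᶜ, LinearMap.ker (LinearMap.proj a)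

lemma mem_coordSubspace {T : Finset n} {v : n → K} :
    v ∈ coordSubspace K T ↔ ∀ a ∉ T, v a = 0 := by
  simp [coordSubspace]

lemma coordSubspace_mono {T U : Finset n} (h : T ⊆ U) : coordSubspace K T ≤ coordSubspace K U :=
  fun _ hv => mem_coordSubspace.2 fun a ha => mem_coordSubspace.1 hv a fun haT => ha (h haT)

end Semiring

/-- `A` is strictly block lower triangular for the blocks given by the index function `β`. -/
def IsStrictlyBlockLower (β : n → ℕ) [Zero K] (A : Matrix n n K) : Prop :=
  ∀ i j, β i ≤ β j → A i j = 0

lemma IsStrictlyBlockLower.neg [NegZeroClass K] {β : n → ℕ} {A : Matrix n n K}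
    (hA : IsStrictlyBlockLower β A) : IsStrictlyBlockLower β (-A) :=
  fun i j hij => by simp [hA i j hij]

lemma IsStrictlyBlockLower.map_coordSubspace_le [CommSemiring K] [Fintype n] [DecidableEq n]
    {β : n → ℕ} {A : Matrix n n K} (hA : IsStrictlyBlockLower β A) (i : ℕ) :
    (coordSubspace K {a | i ≤ β a}).map (Matrix.toLin' A) ≤ coordSubspace K {a | i + 1 ≤ β a} := by
  rintro _ ⟨v, hv, rfl⟩
  refine mem_coordSubspace.2 fun a ha => sum_eq_zero fun b _ => ?_
  simp only [mem_filter_univ, not_le] at ha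
  by_cases hab : β a ≤ β b
  · simp [hA a b hab]
  · rw [mem_coordSubspace.1 hv b (by simp only [mem_filter_univ]; omega), mul_zero]

variable [Field K]

lemma finrank_coordSubspace [Finite n] (T : Finset n) :
    Module.finrank K (coordSubspace K T) = #T := by
  classical
  have := Fintype.ofFinite n
  rw [coordSubspace, (LinearMap.iInfKerProjEquiv K (fun _ : n => K) (I := (T : Set n))
    disjoint_compl_right (by simp)).finrank_eq, Module.finrank_fintype_fun_eq_card]
  simp

lemma finrank_map_coordSubspace_le [Finite n] {T U : Finset n} (hTU : T ⊆ U)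
    (f : Module.End K (n → K)) :
    Module.finrank K ((coordSubspace K U).map f) + #T ≤
      Module.finrank K ((coordSubspace K T).map f) + #U := by
  have hker := Submodule.finrank_mono
    (inf_le_inf_right (LinearMap.ker f) (coordSubspace_mono (K := K) hTU))
  have hT := finrank_map_add_finrank_inf_ker f (coordSubspace K T)
  have hU := finrank_map_add_finrank_inf_ker f (coordSubspace K U)
  rw [finrank_coordSubspace] at hT hU
  omega

variable [Fintype n] [DecidableEq n] {β : n → ℕ} {A : Matrix n n K}

lemma IsStrictlyBlockLower.finrank_map_pow_le (hA : IsStrictlyBlockLower β A) (S : Finset ℕ) :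
    ∀ k i : ℕ, (∀ a, β a < i + k) →
      Module.finrank K ((coordSubspace K {a | i ≤ β a}).map
        (Matrix.toLin' A ^ #{j ∈ S | i ≤ j})) ≤ #{a | i ≤ β a ∧ β a ∉ S}
  | 0, i, hβ => by
    have hempty : ({a | i ≤ β a} : Finset n) = ∅ := filter_false_of_mem fun a _ => by
      have := hβ a
      omega
    have hle := Submodule.finrank_map_le (Matrix.toLin' A ^ #{j ∈ S | i ≤ j})
      (coordSubspace K {a | i ≤ β a})
    rw [finrank_coordSubspace, hempty, card_empty, Nat.le_zero] at hle
    rw [hempty, hle]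
    exact Nat.zero_le _
  | k + 1, i, hβ => by
    have ih := finrank_map_pow_le hA S k (i + 1) fun a => by have := hβ a; omega
    by_cases hi : i ∈ S
    · have hinsert : {j ∈ S | i ≤ j} = insert i {j ∈ S | i + 1 ≤ j} := by grind
      rw [hinsert, card_insert_of_notMem (by simp), submodule_map_pow_succ]
      calc _ ≤ _ := Submodule.finrank_mono (Submodule.map_mono (hA.map_coordSubspace_le i))
        _ ≤ _ := ih
        _ ≤ _ := card_le_card (monotone_filter_right _ fun a _ ha => ⟨by omega, ha.2⟩)
    · have hsame : {j ∈ S | i ≤ j} = {j ∈ S | i + 1 ≤ j} := by grind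
      have hsub : ({a | i + 1 ≤ β a} : Finset n) ⊆ ({a | i ≤ β a} : Finset n) :=
        monotone_filter_right _ fun a _ ha => by omega
      have hstep := finrank_map_coordSubspace_le hsub (Matrix.toLin' A ^ #{j ∈ S | i ≤ j})
      have hcard : #{a | i ≤ β a ∧ β a ∉ S} + #{a | i + 1 ≤ β a} =
          #{a | i + 1 ≤ β a ∧ β a ∉ S} + #{a | i ≤ β a} := by
        simp only [card_filter, ← sum_add_distrib]
        exact sum_congr rfl fun a _ => by grind
      rw [hsame] at hstep ⊢
      omega

lemma IsStrictlyBlockLower.rank_pow_card_le (hA : IsStrictlyBlockLower β A) (S : Finset ℕ) :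
    (A ^ #S).rank ≤ #{a | β a ∉ S} := by
  have h := hA.finrank_map_pow_le S (univ.sup β + 1) 0 fun a => by
    have := le_sup (f := β) (mem_univ a)
    omega
  have htop : coordSubspace K (univ : Finset n) = ⊤ :=
    eq_top_iff.2 fun v _ => mem_coordSubspace.2 fun a ha => (ha (mem_univ a)).elim
  rw [rank_pow_eq_finrank_range_toLin', LinearMap.range_eq_map]
  rw [filter_true_of_mem fun _ _ => Nat.zero_le _, filter_true_of_mem fun _ _ => Nat.zero_le _,
    htop] at h
  simpa only [Nat.zero_le, true_and] using h

lemma IsStrictlyBlockLower.isNilpotent (hA : IsStrictlyBlockLower β A) :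
    IsNilpotent (Matrix.toLin' A) := by
  refine ⟨#(univ.image β), LinearMap.range_eq_bot.1 (Submodule.finrank_eq_zero.1 ?_)⟩
  rw [← rank_pow_eq_finrank_range_toLin', ← Nat.le_zero]
  exact (hA.rank_pow_card_le (univ.image β)).trans (by simp)

end CoordinateFlag

section BlockSizes

lemma blkSum_mono (c : ℕ → ℕ) : Monotone (blkSum c) :=
  fun _ _ hij => sum_le_sum_of_subset (Icc_subset_Icc_right hij)

lemma blkSum_succ (c : ℕ → ℕ) (j : ℕ) : blkSum c (j + 1) = blkSum c j + c (j + 1) :=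
  sum_Icc_succ_top (Nat.le_add_left 1 j) c

lemma blk_le_iff {c : ℕ → ℕ} {l a j : ℕ} (ha : a ≤ blkSum c l) :
    blk c a ≤ j ↔ a ≤ blkSum c j := by
  refine ⟨fun h => ?_, fun h => Nat.sInf_le h⟩
  have hmem : a ≤ blkSum c (blk c a) := Nat.sInf_mem (s := {j | a ≤ blkSum c j}) ⟨l, ha⟩
  exact hmem.trans (blkSum_mono c h)

lemma blk_eq_succ_iff {c : ℕ → ℕ} {l a j : ℕ} (ha : a < blkSum c l) :
    blk c (a + 1) = j + 1 ↔ blkSum c j ≤ a ∧ a < blkSum c (j + 1) := by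
  have hj := blk_le_iff (a := a + 1) (j := j) ha
  have hj₁ := blk_le_iff (a := a + 1) (j := j + 1) ha
  omega

lemma lt_of_blk_lt {a b : ℕ} (hb : 0 < blk c b) (hab : blk c b < blk c a) : b < a := by
  by_contra! hle
  have hmem : b ≤ blkSum c (blk c b) := Nat.sInf_mem (Nat.nonempty_of_pos_sInf hb)
  exact hab.not_ge (Nat.sInf_le (hle.trans hmem))

/-- `β` assigns to each of the indices `0, …, n - 1` the number of its block, for blocks numbered
`1, …, l` of sizes `c 1, …, c l` whose extreme blocks are the first and the last `c 1` indices.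
Here `m = n - c 1`. -/
structure IsBlockIndexing (l : ℕ) (c : ℕ → ℕ) {n : ℕ} (m : ℕ) (β : Fin n → ℕ) : Prop where
  two_le : 2 ≤ l
  pos : 0 < c 1
  size_last : c l = c 1
  add_size_first : m + c 1 = n
  mem_Icc : ∀ a, β a ∈ Icc 1 l
  card_eq : ∀ i ∈ Icc 1 l, #{a | β a = i} = c i
  eq_one_iff : ∀ a, β a = 1 ↔ a.1 < c 1
  eq_last_iff : ∀ a, β a = l ↔ m ≤ a.1

lemma isBlockIndexing_blk {l : ℕ} {c : ℕ → ℕ} {n m : ℕ} (hl : 2 ≤ l) (hc : 0 < c 1)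
    (hcl : c l = c 1) (hn : n = blkSum c l) (hm : m + c 1 = n) :
    IsBlockIndexing l c m fun a : Fin n => blk c (a.1 + 1) := by
  have hlt : ∀ a : Fin n, a.1 < blkSum c l := fun a => hn ▸ a.2
  have hle : ∀ (a : Fin n) j, blk c (a.1 + 1) ≤ j ↔ a.1 + 1 ≤ blkSum c j :=
    fun a _ => blk_le_iff (hlt a)
  have hzero : blkSum c 0 = 0 := by simp [blkSum]
  have hone : blkSum c 1 = c 1 := by simp [blkSum]
  obtain ⟨k, rfl⟩ : ∃ k, l = k + 1 := ⟨l - 1, by omega⟩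
  have hlast := blkSum_succ c k
  refine ⟨hl, hc, hcl, hm, fun a => ?_, fun i hi => ?_, fun a => ?_, fun a => ?_⟩
  · have := hle a 0
    have := hle a (k + 1)
    have := hlt a
    rw [mem_Icc]
    omega
  · obtain ⟨j, rfl⟩ : ∃ j, i = j + 1 := ⟨i - 1, by have := (mem_Icc.1 hi).1; omega⟩
    have hjl := blkSum_mono c (mem_Icc.1 hi).2
    have hmap : ({a | blk c (a.1 + 1) = j + 1} : Finset (Fin n)).map Fin.valEmbedding =
        Ico (blkSum c j) (blkSum c (j + 1)) := by
      ext b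
      simp only [mem_map, mem_filter_univ, Fin.valEmbedding_apply, mem_Ico]
      constructor
      · rintro ⟨a, ha, rfl⟩
        exact (blk_eq_succ_iff (hlt a)).1 ha
      · exact fun hb => ⟨⟨b, by omega⟩, (blk_eq_succ_iff (l := k + 1) (by omega)).2 hb, rfl⟩
    rw [← card_map Fin.valEmbedding, hmap, Nat.card_Ico, blkSum_succ, Nat.add_sub_cancel_left]
  · have := hle a 0
    have := hle a 1
    omega
  · have := hle a k
    have := hle a (k + 1)
    have := hlt a
    omega

namespace IsBlockIndexing

variable {l : ℕ} {c : ℕ → ℕ} {n m : ℕ} {β : Fin n → ℕ}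

lemma one_mem_Icc (h : IsBlockIndexing l c m β) : 1 ∈ Icc 1 l :=
  Finset.mem_Icc.2 ⟨le_rfl, one_le_two.trans h.two_le⟩

lemma last_mem_Icc (h : IsBlockIndexing l c m β) : l ∈ Icc 1 l :=
  Finset.mem_Icc.2 ⟨one_le_two.trans h.two_le, le_rfl⟩

lemma size_first_le (h : IsBlockIndexing l c m β) : c 1 ≤ m := by
  by_contra! hlt
  have hm := h.add_size_first
  have hpos := h.pos
  have hfirst := (h.eq_one_iff ⟨m, by omega⟩).2 hlt
  have hlast := (h.eq_last_iff ⟨m, by omega⟩).2 le_rfl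
  have := h.two_le
  omega

lemma card_filter_eq_sum (h : IsBlockIndexing l c m β) (p : ℕ → Prop) [DecidablePred p] :
    #{a | p (β a)} = ∑ i ∈ Icc 1 l with p i, c i := by
  rw [card_eq_sum_card_fiberwise (f := β) (t := {i ∈ Icc 1 l | p i})
    fun a ha => mem_filter.2 ⟨h.mem_Icc a, (mem_filter_univ a).1 ha⟩]
  refine sum_congr rfl fun i hi => ?_
  rw [mem_filter] at hi
  rw [← h.card_eq i hi.1, filter_filter]
  exact congrArg card (filter_congr fun a _ => ⟨And.right, fun ha => ⟨ha ▸ hi.2, ha⟩⟩)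

variable {r s : ℕ}

lemma card_small (h : IsBlockIndexing l c m β)
    (hs : s = (∑ i ∈ Icc 1 l with c i ≤ c 1, c i) - 2 * c 1) :
    #{a | c (β a) ≤ c 1} = s + 2 * c 1 := by
  have hsub : ({1, l} : Finset ℕ) ⊆ {i ∈ Icc 1 l | c i ≤ c 1} := by
    simp only [insert_subset_iff, singleton_subset_iff, mem_filter]
    exact ⟨⟨h.one_mem_Icc, le_rfl⟩, h.last_mem_Icc, h.size_last.le⟩
  have hle := sum_le_sum_of_subset (f := c) hsub
  rw [sum_pair (by have := h.two_le; omega), h.size_last] at hle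
  rw [h.card_filter_eq_sum fun i => c i ≤ c 1]
  omega

lemma card_large (h : IsBlockIndexing l c m β) (hr : r = #{i ∈ Icc 1 l | c 1 < c i}) :
    #{a | c 1 < c (β a)} = dBS c l + r * c 1 := by
  have hd : dBS c l = ∑ i ∈ Icc 1 l with c 1 < c i, (c i - c 1) := by
    rw [dBS, sum_filter]
    refine sum_congr rfl fun i _ => ?_
    split_ifs <;> omega
  rw [h.card_filter_eq_sum fun i => c 1 < c i, hd, hr, ← smul_eq_mul, ← sum_const,
    ← sum_add_distrib]
  refine sum_congr rfl fun i hi => ?_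
  have := (mem_filter.1 hi).2
  omega

lemma eq_size (h : IsBlockIndexing l c m β) (hr : r = #{i ∈ Icc 1 l | c 1 < c i})
    (hs : s = (∑ i ∈ Icc 1 l with c i ≤ c 1, c i) - 2 * c 1) :
    n = s + 2 * c 1 + dBS c l + r * c 1 := by
  have hsplit := card_filter_add_card_filter_not (s := univ) fun a => c (β a) ≤ c 1
  simp only [not_le] at hsplit
  rw [h.card_small hs, h.card_large hr, card_univ, Fintype.card_fin] at hsplit
  omega

variable {K : Type*} [Field K] {A : Matrix (Fin n) (Fin n) K}

lemma rank_pow_le (h : IsBlockIndexing l c m β) (hA : IsStrictlyBlockLower β A)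
    (hr : r = #{i ∈ Icc 1 l | c 1 < c i})
    (hs : s = (∑ i ∈ Icc 1 l with c i ≤ c 1, c i) - 2 * c 1) :
    (A ^ r).rank ≤ s + 2 * c 1 := by
  rw [hr, ← h.card_small hs]
  refine (hA.rank_pow_card_le _).trans (card_le_card (monotone_filter_right _ fun a _ ha => ?_))
  have := h.mem_Icc a
  grind

lemma rank_pow_add_two_le (h : IsBlockIndexing l c m β) (hA : IsStrictlyBlockLower β A)
    (hr : r = #{i ∈ Icc 1 l | c 1 < c i})
    (hs : s = (∑ i ∈ Icc 1 l with c i ≤ c 1, c i) - 2 * c 1) :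
    (A ^ (r + 2)).rank ≤ s := by
  have h1l : 1 ≠ l := by have := h.two_le; omega
  have hcl := h.size_last
  have hdisj : Disjoint {i ∈ Icc 1 l | c 1 < c i} {1, l} := by
    rw [disjoint_left]
    grind
  have hrank := hA.rank_pow_card_le ({i ∈ Icc 1 l | c 1 < c i} ∪ {1, l})
  rw [card_union_of_disjoint hdisj, card_pair h1l, ← hr] at hrank
  have hsub : ({a | β a ∉ ({i ∈ Icc 1 l | c 1 < c i} ∪ {1, l} : Finset ℕ)} : Finset (Fin n)) ∪
      (({a | β a = 1} : Finset (Fin n)) ∪ ({a | β a = l} : Finset (Fin n))) ⊆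
        ({a | c (β a) ≤ c 1} : Finset (Fin n)) := by
    intro a
    have := h.mem_Icc a
    grind
  have hle := card_le_card hsub
  rw [card_union_of_disjoint (by rw [disjoint_left]; grind),
    card_union_of_disjoint (by rw [disjoint_left]; grind), h.card_eq 1 h.one_mem_Icc,
    h.card_eq l h.last_mem_Icc, hcl, h.card_small hs] at hle
  omega

end IsBlockIndexing

end BlockSizes

section Counting

variable {n : Type*} [Fintype n] [DecidableEq n] {β : n → ℕ} {σ : Equiv.Perm n} {J : Finset n}

lemma card_fiber_le_card_fixed_add_card_compl (hσ : ∀ j ∈ J, σ j = j ∨ β j < β (σ j)) (i : ℕ) :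
    #{a | β a = i} ≤ #{j ∈ J | σ j = j ∧ β j = i} + #{j ∈ Jᶜ | i ≤ β j} := by
  have hsplit : #{a | i ≤ β a} = #{a | β a = i} + #{a | i < β a} := by
    simp only [card_filter, ← sum_add_distrib]
    exact sum_congr rfl fun a _ => by grind
  have hperm : #{a | i < β (σ a)} = #{a | i < β a} :=
    card_equiv σ fun a => by simp only [mem_filter_univ]
  have hcover : ({a | i ≤ β a} : Finset n) ⊆ ({j ∈ Jᶜ | i ≤ β j} ∪
      {j ∈ J | σ j = j ∧ β j = i}) ∪ ({a | i < β (σ a)} : Finset n) := by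
    intro a ha
    rw [mem_filter_univ] at ha
    by_cases hJ : a ∈ J
    · have := hσ a hJ
      grind
    · simp [hJ, ha]
  have hle := (card_le_card hcover).trans (card_union_le _ _)
  have := card_union_le {j ∈ Jᶜ | i ≤ β j} {j ∈ J | σ j = j ∧ β j = i}
  omega

namespace IsBlockIndexing

variable {l : ℕ} {c : ℕ → ℕ} {n m : ℕ} {β : Fin n → ℕ} {σ : Equiv.Perm (Fin n)}
  {J : Finset (Fin n)}

lemma card_fixed_eq_sum (h : IsBlockIndexing l c m β) (σ : Equiv.Perm (Fin n))
    (J : Finset (Fin n)) :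
    #{j ∈ J | σ j = j} = ∑ i ∈ Icc 1 l, #{j ∈ J | σ j = j ∧ β j = i} := by
  rw [card_eq_sum_card_fiberwise (f := β) (t := Icc 1 l) fun a _ => h.mem_Icc a]
  simp only [filter_filter]

lemma size_sub_le_card_fixed (h : IsBlockIndexing l c m β)
    (hσ : ∀ j ∈ J, σ j = j ∨ β j < β (σ j)) (hJ : #Jᶜ ≤ c 1) {i : ℕ} (hi : i ∈ Icc 1 l) :
    c i - c 1 ≤ #{j ∈ J | σ j = j ∧ β j = i} := by
  have hfiber := card_fiber_le_card_fixed_add_card_compl hσ i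
  have hfilter := card_filter_le Jᶜ fun j => i ≤ β j
  rw [h.card_eq i hi] at hfiber
  omega

lemma dBS_le_card_fixed (h : IsBlockIndexing l c m β)
    (hσ : ∀ j ∈ J, σ j = j ∨ β j < β (σ j)) (hJ : #Jᶜ ≤ c 1) :
    dBS c l ≤ #{j ∈ J | σ j = j} := by
  rw [h.card_fixed_eq_sum, dBS]
  exact sum_le_sum fun i hi => h.size_sub_le_card_fixed hσ hJ hi

lemma card_fixed_eq_size_sub (h : IsBlockIndexing l c m β)
    (hσ : ∀ j ∈ J, σ j = j ∨ β j < β (σ j)) (hJ : #Jᶜ ≤ c 1)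
    (hfix : #{j ∈ J | σ j = j} ≤ dBS c l) {i : ℕ} (hi : i ∈ Icc 1 l) :
    #{j ∈ J | σ j = j ∧ β j = i} = c i - c 1 := by
  rw [h.card_fixed_eq_sum, dBS] at hfix
  have hle := fun i hi => h.size_sub_le_card_fixed hσ hJ (i := i) hi
  exact ((sum_eq_sum_iff_of_le hle).1 ((sum_le_sum hle).antisymm hfix) i hi).symm

lemma compl_eq_last_of_card_fixed_le (h : IsBlockIndexing l c m β)
    (hσ : ∀ j ∈ J, σ j = j ∨ β j < β (σ j)) (hJ : #Jᶜ ≤ c 1)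
    (hfix : #{j ∈ J | σ j = j} ≤ dBS c l) : Jᶜ = ({j | β j = l} : Finset (Fin n)) := by
  have hl := h.last_mem_Icc
  have hfiber := card_fiber_le_card_fixed_add_card_compl hσ l
  rw [h.card_eq l hl, h.card_fixed_eq_size_sub hσ hJ hfix hl, h.size_last, Nat.sub_self,
    zero_add] at hfiber
  have hge : ({j ∈ Jᶜ | l ≤ β j} : Finset (Fin n)) = Jᶜ :=
    eq_of_subset_of_card_le (filter_subset _ _) (hJ.trans hfiber)
  refine eq_of_subset_of_card_le (fun j hj => ?_) ?_
  · rw [← hge, mem_filter] at hj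
    exact (mem_filter_univ j).2 ((Finset.mem_Icc.1 (h.mem_Icc j)).2.antisymm hj.2)
  · rw [h.card_eq l hl, h.size_last, ← hge]
    exact hfiber

lemma apply_eq_one_of_card_fixed_le (h : IsBlockIndexing l c m β)
    (hσ : ∀ j ∈ J, σ j = j ∨ β j < β (σ j)) (hJ : #Jᶜ ≤ c 1)
    (hfix : #{j ∈ J | σ j = j} ≤ dBS c l) {j : Fin n} (hj : j ∉ J) : β (σ j) = 1 := by
  have hempty := h.card_fixed_eq_size_sub hσ hJ hfix h.one_mem_Icc
  rw [Nat.sub_self, card_eq_zero] at hempty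
  have hmaps : ∀ a ∈ ({a | β (σ a) = 1} : Finset (Fin n)), a ∈ Jᶜ := by
    intro a ha
    rw [mem_filter_univ] at ha
    refine mem_compl.2 fun haJ => ?_
    have := (Finset.mem_Icc.1 (h.mem_Icc a)).1
    rcases hσ a haJ with hfixed | hraised
    · rw [hfixed] at ha
      exact notMem_empty a (hempty ▸ mem_filter.2 ⟨haJ, hfixed, ha⟩)
    · omega
  have hcard : #{a | β (σ a) = 1} = c 1 := by
    rw [← h.card_eq 1 h.one_mem_Icc]
    exact card_equiv σ fun a => by simp only [mem_filter_univ]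
  have heq := eq_of_subset_of_card_le hmaps (hcard ▸ hJ)
  exact (mem_filter_univ j).1 (heq ▸ mem_compl.2 hj)

end IsBlockIndexing

end Counting

section MixedDeterminants

variable {R K n : Type*} [CommRing R] [Field K] [Fintype n] [DecidableEq n]

/-- The characteristic matrix of `A` with the columns outside `J` replaced by those of `Y`. -/
def mixedCharmatrix (A Y : Matrix n n R) (J : Finset n) : Matrix n n (Polynomial R) :=
  Matrix.of fun i j => if j ∈ J then A.charmatrix i j else Polynomial.C (Y i j)

lemma charpoly_sub_eq_sum_det_mixedCharmatrix (A D : Matrix n n R) :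
    (A - D).charpoly = ∑ J, (mixedCharmatrix A D J).det := by
  have hadd : (A - D).charmatrix.transpose =
      A.charmatrix.transpose + (D.map Polynomial.C).transpose := by
    ext1 i j
    simp only [Matrix.charmatrix_apply, Matrix.transpose_apply, Matrix.add_apply,
      Matrix.sub_apply, Matrix.map_apply, map_sub]
    ring
  rw [Matrix.charpoly, ← Matrix.det_transpose, hadd]
  refine (Matrix.detRowAlternating.map_add_univ _ _).trans (sum_congr rfl fun J _ => ?_)
  rw [← Matrix.det_transpose (mixedCharmatrix A D J)]
  refine congrArg Matrix.det (Matrix.ext fun i j => ?_)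
  by_cases hi : i ∈ J <;> simp [mixedCharmatrix, Finset.piecewise, hi]

lemma det_mixedCharmatrix_eq_zero_of_rank_lt {A D : Matrix n n K} {J : Finset n}
    (h : D.rank < #Jᶜ) : (mixedCharmatrix A D J).det = 0 := by
  have hker : (coordSubspace K Jᶜ ⊓ LinearMap.ker D.toLin' : Submodule K (n → K)) ≠ ⊥ := by
    intro hbot
    have hdim := finrank_map_add_finrank_inf_ker D.toLin' (coordSubspace K Jᶜ)
    have hle := Submodule.finrank_mono
      (LinearMap.map_le_range (f := D.toLin') (p := coordSubspace K Jᶜ))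
    have hrank := rank_pow_eq_finrank_range_toLin' D 1
    rw [pow_one, pow_one] at hrank
    rw [hbot, finrank_bot, finrank_coordSubspace] at hdim
    omega
  obtain ⟨v, ⟨hvJ, hDv⟩, hv⟩ := Submodule.exists_mem_ne_zero_of_ne_bot hker
  refine Matrix.exists_mulVec_eq_zero_iff.1 ⟨Polynomial.C ∘ v, ?_, ?_⟩
  · exact fun h0 => hv (funext fun j => Polynomial.C_eq_zero.1 (congrFun h0 j))
  · calc (mixedCharmatrix A D J).mulVec (Polynomial.C ∘ v)
        = (D.map Polynomial.C).mulVec (Polynomial.C ∘ v) := by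
          refine funext fun i => sum_congr rfl fun j _ => ?_
          by_cases hj : j ∈ J
          · simp [mem_coordSubspace.1 hvJ j (by simpa using hj)]
          · simp [mixedCharmatrix, hj]
      _ = 0 := by
          refine funext fun i => ?_
          rw [← RingHom.map_mulVec]
          simpa using congrFun hDv i

variable {β : n → ℕ} {A Y : Matrix n n R} {J : Finset n} {σ : Equiv.Perm n}

lemma IsStrictlyBlockLower.eq_or_lt_of_prod_ne_zero (hA : IsStrictlyBlockLower β A)
    (hprod : ∏ j, mixedCharmatrix A Y J (σ j) j ≠ 0) : ∀ j ∈ J, σ j = j ∨ β j < β (σ j) := by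
  intro j hj
  by_contra! hσ
  refine hprod (prod_eq_zero (mem_univ j) ?_)
  simp [mixedCharmatrix, hj, Matrix.charmatrix_apply_ne _ _ _ hσ.1, hA _ _ hσ.2]

lemma IsStrictlyBlockLower.X_pow_card_fixed_dvd_prod (hA : IsStrictlyBlockLower β A) :
    (Polynomial.X : Polynomial R) ^ #{j ∈ J | σ j = j} ∣
      ∏ j, mixedCharmatrix A Y J (σ j) j := by
  rw [← prod_const]
  refine (prod_dvd_prod_of_dvd _ _ fun j hj => ?_).trans
    (prod_dvd_prod_of_subset _ _ _ (subset_univ _))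
  rw [mem_filter] at hj
  simp [mixedCharmatrix, hj.1, hj.2, hA j j le_rfl]

lemma IsStrictlyBlockLower.card_fixed_le_of_coeff_ne_zero (hA : IsStrictlyBlockLower β A) {d : ℕ}
    (hcoeff : (∏ j, mixedCharmatrix A Y J (σ j) j).coeff d ≠ 0) : #{j ∈ J | σ j = j} ≤ d := by
  by_contra! hlt
  exact hcoeff (Polynomial.X_pow_dvd_iff.1 hA.X_pow_card_fixed_dvd_prod d hlt)

end MixedDeterminants

section CornerMinors

lemma det_submatrix_equiv_equiv {R ι κ : Type*} [CommRing R] [Fintype ι] [DecidableEq ι]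
    [Fintype κ] [DecidableEq κ] (e f : ι ≃ κ) (N : Matrix κ κ R) :
    (N.submatrix e f).det = (Equiv.Perm.sign (f.symm.trans e) : ℤ) * N.det := by
  rw [← Matrix.det_permute, ← Matrix.det_submatrix_equiv_self f, Matrix.submatrix_submatrix]
  congr 2
  ext i
  simp

variable {n m k : ℕ}

/-- The row indices `0, …, n - 1`, with the rows of the lower left `m × m` corner coming first. -/
def rowEquiv (h : m + k = n) : Fin m ⊕ Fin k ≃ Fin n :=
  (Equiv.sumComm _ _).trans (finSumFinEquiv.trans (finCongr ((add_comm k m).trans h)))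

/-- The column indices `0, …, n - 1`, with the columns of the lower left `m × m` corner coming
first. -/
def colEquiv (h : m + k = n) : Fin m ⊕ Fin k ≃ Fin n :=
  finSumFinEquiv.trans (finCongr h)

variable (h : m + k = n)

@[simp] lemma val_rowEquiv_inl (i : Fin m) : (rowEquiv h (Sum.inl i)).1 = k + i.1 := by
  simp [rowEquiv]

@[simp] lemma val_rowEquiv_inr (i : Fin k) : (rowEquiv h (Sum.inr i)).1 = i.1 := by
  simp [rowEquiv]

@[simp] lemma val_colEquiv_inl (j : Fin m) : (colEquiv h (Sum.inl j)).1 = j.1 := by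
  simp [colEquiv]

@[simp] lemma val_colEquiv_inr (j : Fin k) : (colEquiv h (Sum.inr j)).1 = m + j.1 := by
  simp [colEquiv]

variable {R : Type*} [CommRing R]

/-- The determinant of the lower left `m × m` corner of the characteristic matrix of `A`. -/
def charmatrixMinor (A : Matrix (Fin n) (Fin n) R) : Polynomial R :=
  (A.charmatrix.submatrix (rowEquiv h ∘ Sum.inl) (colEquiv h ∘ Sum.inl)).det

/-- The upper right `k × k` corner of `D`, complementary to the lower left `m × m` one. -/
def upperRightCorner (D : Matrix (Fin n) (Fin n) R) : Matrix (Fin k) (Fin k) R :=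
  D.submatrix (rowEquiv h ∘ Sum.inr) (colEquiv h ∘ Sum.inr)

lemma exists_rank_le_upperRightCorner_eq_one (K : Type*) [Field K] :
    ∃ D : Matrix (Fin n) (Fin n) K, D.rank ≤ k ∧ upperRightCorner h D = 1 := by
  refine ⟨(Matrix.fromRows (0 : Matrix (Fin m) (Fin k) K) 1).submatrix (rowEquiv h).symm id *
    (Matrix.fromCols (0 : Matrix (Fin k) (Fin m) K) 1).submatrix id (colEquiv h).symm, ?_, ?_⟩
  · exact (Matrix.rank_mul_le_left _ _).trans (Matrix.rank_le_width _)
  · ext i j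
    simp [upperRightCorner, Matrix.mul_apply, Matrix.one_apply]

end CornerMinors

namespace IsBlockIndexing

variable {l : ℕ} {c : ℕ → ℕ} {n m : ℕ} {β : Fin n → ℕ} {K : Type*} [Field K]
  {A D : Matrix (Fin n) (Fin n) K} {J : Finset (Fin n)}

lemma X_pow_dBS_dvd_det_mixedCharmatrix (h : IsBlockIndexing l c m β)
    (hA : IsStrictlyBlockLower β A) (hJ : #Jᶜ ≤ c 1) :
    Polynomial.X ^ dBS c l ∣ (mixedCharmatrix A D J).det := by
  rw [Matrix.det_apply]
  refine dvd_sum fun σ _ => dvd_smul_of_dvd _ ?_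
  by_cases hprod : ∏ j, mixedCharmatrix A D J (σ j) j = 0
  · exact hprod ▸ dvd_zero _
  · exact (pow_dvd_pow _ (h.dBS_le_card_fixed (hA.eq_or_lt_of_prod_ne_zero hprod) hJ)).trans
      hA.X_pow_card_fixed_dvd_prod

lemma coeff_det_mixedCharmatrix_eq_zero (h : IsBlockIndexing l c m β)
    (hA : IsStrictlyBlockLower β A) (hJ : #Jᶜ ≤ c 1)
    (hlast : J ≠ ({j | β j = l} : Finset (Fin n))ᶜ) :
    (mixedCharmatrix A D J).det.coeff (dBS c l) = 0 := by
  rw [Matrix.det_apply, Polynomial.finsetSum_coeff]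
  refine sum_eq_zero fun σ _ => ?_
  rw [Polynomial.coeff_smul]
  refine smul_eq_zero_of_right _ ?_
  by_contra hcoeff
  have hσ := hA.eq_or_lt_of_prod_ne_zero fun hprod => hcoeff (by rw [hprod, Polynomial.coeff_zero])
  have hfix := hA.card_fixed_le_of_coeff_ne_zero hcoeff
  exact hlast (compl_eq_comm.1 (h.compl_eq_last_of_card_fixed_le hσ hJ hfix)).symm

lemma coeff_det_mixedCharmatrix_congr (h : IsBlockIndexing l c m β)
    (hA : IsStrictlyBlockLower β A) (hJ : #Jᶜ ≤ c 1) {Y Y' : Matrix (Fin n) (Fin n) K}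
    (hY : ∀ i j, β i = 1 → Y i j = Y' i j) :
    (mixedCharmatrix A Y J).det.coeff (dBS c l) = (mixedCharmatrix A Y' J).det.coeff (dBS c l) := by
  rw [Matrix.det_apply, Matrix.det_apply, Polynomial.finsetSum_coeff, Polynomial.finsetSum_coeff]
  refine sum_congr rfl fun σ _ => ?_
  rw [Polynomial.coeff_smul, Polynomial.coeff_smul]
  by_cases hσ : (∀ j ∈ J, σ j = j ∨ β j < β (σ j)) ∧ #{j ∈ J | σ j = j} ≤ dBS c l
  · congr 2
    refine prod_congr rfl fun j _ => ?_
    by_cases hj : j ∈ J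
    · simp [mixedCharmatrix, hj]
    · simp [mixedCharmatrix, hj, hY _ _ (h.apply_eq_one_of_card_fixed_le hσ.1 hJ hσ.2 hj)]
  · have hzero : ∀ Y, (∏ j, mixedCharmatrix A Y J (σ j) j).coeff (dBS c l) = 0 := by
      intro Y
      by_contra hcoeff
      exact hσ ⟨hA.eq_or_lt_of_prod_ne_zero fun hprod =>
        hcoeff (by rw [hprod, Polynomial.coeff_zero]), hA.card_fixed_le_of_coeff_ne_zero hcoeff⟩
    rw [hzero Y, hzero Y']

lemma submatrix_mixedCharmatrix_eq_fromBlocks (h : IsBlockIndexing l c m β)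
    {Y : Matrix (Fin n) (Fin n) K} (hY : ∀ i j, β i ≠ 1 → Y i j = 0) :
    ∃ B, (mixedCharmatrix A Y ({j | β j = l} : Finset (Fin n))ᶜ).submatrix
        (rowEquiv h.add_size_first) (colEquiv h.add_size_first) =
      Matrix.fromBlocks (A.charmatrix.submatrix (rowEquiv h.add_size_first ∘ Sum.inl)
        (colEquiv h.add_size_first ∘ Sum.inl)) 0 B
        ((upperRightCorner h.add_size_first Y).map Polynomial.C) := by
  have hrow : ∀ i, β (rowEquiv h.add_size_first (Sum.inl i)) ≠ 1 := fun i => by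
    rw [Ne, h.eq_one_iff, val_rowEquiv_inl]
    omega
  have hcoll : ∀ j, β (colEquiv h.add_size_first (Sum.inl j)) ≠ l := fun j => by
    rw [Ne, h.eq_last_iff, val_colEquiv_inl]
    omega
  have hcolr : ∀ j, β (colEquiv h.add_size_first (Sum.inr j)) = l := fun j => by
    rw [h.eq_last_iff, val_colEquiv_inr]
    omega
  refine ⟨Matrix.of fun i j => mixedCharmatrix A Y ({j | β j = l} : Finset (Fin n))ᶜ
    (rowEquiv h.add_size_first (Sum.inr i)) (colEquiv h.add_size_first (Sum.inl j)), ?_⟩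
  ext1 i j
  rcases i with i | i <;> rcases j with j | j <;>
    simp [mixedCharmatrix, upperRightCorner, hcoll, hcolr, hY _ _ (hrow _)]

lemma coeff_det_mixedCharmatrix_last (h : IsBlockIndexing l c m β)
    (hA : IsStrictlyBlockLower β A) (D : Matrix (Fin n) (Fin n) K) :
    (charmatrixMinor h.add_size_first A).coeff (dBS c l) *
        (upperRightCorner h.add_size_first D).det =
      (Equiv.Perm.sign ((colEquiv h.add_size_first).symm.trans (rowEquiv h.add_size_first)) : ℤ) *
        (mixedCharmatrix A D ({j | β j = l} : Finset (Fin n))ᶜ).det.coeff (dBS c l) := by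
  set Y : Matrix (Fin n) (Fin n) K := Matrix.of fun i j => if β i = 1 then D i j else 0
  obtain ⟨B, hB⟩ := h.submatrix_mixedCharmatrix_eq_fromBlocks (A := A) (Y := Y)
    fun i j hi => by simp [Y, hi]
  have hcorner : upperRightCorner h.add_size_first Y = upperRightCorner h.add_size_first D := by
    ext i j
    have hi : β (rowEquiv h.add_size_first (Sum.inr i)) = 1 := by simp [h.eq_one_iff]
    simp [upperRightCorner, Y, hi]
  have hcard : #(({j | β j = l} : Finset (Fin n))ᶜ)ᶜ ≤ c 1 := by
    rw [compl_compl, h.card_eq l h.last_mem_Icc, h.size_last]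
  rw [h.coeff_det_mixedCharmatrix_congr hA hcard (Y' := Y) fun i j hi => by simp [Y, hi]]
  have hdet := congrArg (fun N => (Matrix.det N).coeff (dBS c l)) hB
  simp only [det_submatrix_equiv_equiv, Matrix.det_fromBlocks_zero₁₂, ← RingHom.mapMatrix_apply,
    ← RingHom.map_det, Polynomial.coeff_mul_C, ← Polynomial.C_eq_intCast,
    Polynomial.coeff_C_mul, hcorner] at hdet
  exact hdet.symm

lemma X_pow_dBS_dvd_charpoly_sub (h : IsBlockIndexing l c m β) (hA : IsStrictlyBlockLower β A)
    (hD : D.rank ≤ c 1) : Polynomial.X ^ dBS c l ∣ (A - D).charpoly := by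
  rw [charpoly_sub_eq_sum_det_mixedCharmatrix]
  refine dvd_sum fun J _ => ?_
  by_cases hJ : #Jᶜ ≤ c 1
  · exact h.X_pow_dBS_dvd_det_mixedCharmatrix hA hJ
  · rw [det_mixedCharmatrix_eq_zero_of_rank_lt (by omega)]
    exact dvd_zero _

lemma coeff_charmatrixMinor_mul_det_corner (h : IsBlockIndexing l c m β)
    (hA : IsStrictlyBlockLower β A) (hD : D.rank ≤ c 1) :
    (charmatrixMinor h.add_size_first A).coeff (dBS c l) *
        (upperRightCorner h.add_size_first D).det =
      (Equiv.Perm.sign ((colEquiv h.add_size_first).symm.trans (rowEquiv h.add_size_first)) : ℤ) *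
        (A - D).charpoly.coeff (dBS c l) := by
  rw [h.coeff_det_mixedCharmatrix_last hA, charpoly_sub_eq_sum_det_mixedCharmatrix,
    Polynomial.finsetSum_coeff]
  rw [sum_eq_single ({j | β j = l} : Finset (Fin n))ᶜ _ fun hmem => absurd (mem_univ _) hmem]
  intro J _ hJlast
  by_cases hJ : #Jᶜ ≤ c 1
  · exact h.coeff_det_mixedCharmatrix_eq_zero hA hJ hJlast
  · rw [det_mixedCharmatrix_eq_zero_of_rank_lt (by omega), Polynomial.coeff_zero]

variable {r s : ℕ}

lemma coeff_charmatrixMinor_eq_zero (h : IsBlockIndexing l c m β) (hA : IsStrictlyBlockLower β A)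
    (hr : r = #{i ∈ Icc 1 l | c 1 < c i})
    (hs : s = (∑ i ∈ Icc 1 l with c i ≤ c 1, c i) - 2 * c 1)
    (hrank : (A ^ (r + 1)).rank < s + c 1) :
    (charmatrixMinor h.add_size_first A).coeff (dBS c l) = 0 := by
  obtain ⟨D, hD, hcorner⟩ := exists_rank_le_upperRightCorner_eq_one h.add_size_first K
  have hpert : ((A - D) ^ (r + 1)).rank + dBS c l < n := by
    have hle := rank_add_pow_le A (-D) (r + 1)
    have hmul : (r + 1) * D.rank ≤ r * c 1 + c 1 :=
      (Nat.mul_le_mul_left _ hD).trans_eq (Nat.succ_mul r (c 1))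
    rw [← sub_eq_add_neg, rank_neg] at hle
    have := h.eq_size hr hs
    omega
  have hcoeff : (A - D).charpoly.coeff (dBS c l) = 0 := by
    rw [← Matrix.charpoly_toLin']
    refine charpoly_coeff_eq_zero_of_finrank_range_pow_add_lt (k := r + 1) ?_
    rwa [← rank_pow_eq_finrank_range_toLin', Module.finrank_fintype_fun_eq_card, Fintype.card_fin]
  have hmul := h.coeff_charmatrixMinor_mul_det_corner hA hD
  rwa [hcorner, Matrix.det_one, mul_one, hcoeff, mul_zero] at hmul

lemma coeff_charmatrixMinor_ne_zero (h : IsBlockIndexing l c m β) (hA : IsStrictlyBlockLower β A)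
    (hr : r = #{i ∈ Icc 1 l | c 1 < c i})
    (hs : s = (∑ i ∈ Icc 1 l with c i ≤ c 1, c i) - 2 * c 1)
    (hrank : s + c 1 ≤ (A ^ (r + 1)).rank) :
    (charmatrixMinor h.add_size_first A).coeff (dBS c l) ≠ 0 := by
  have hr₀ := h.rank_pow_le hA hr hs
  have hr₂ := h.rank_pow_add_two_le hA hr hs
  rw [rank_pow_eq_finrank_range_toLin'] at hr₀ hr₂ hrank
  obtain ⟨F, hF, P, hP, hdisj, hdim⟩ :=
    exists_perturbation_of_finrank_range_pow hA.isNilpotent hr₀ hrank hr₂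
  set D : Matrix (Fin n) (Fin n) K := -LinearMap.toMatrix' F with hDdef
  have hD : D.rank ≤ c 1 := by
    rw [rank_neg, ← pow_one (LinearMap.toMatrix' F), rank_pow_eq_finrank_range_toLin',
      Matrix.toLin'_toMatrix', pow_one]
    exact hF
  have hlin : (A - D).toLin' = A.toLin' + F := by
    rw [hDdef, sub_neg_eq_add, map_add, Matrix.toLin'_toMatrix']
  rw [← hlin] at hP hdisj
  have hcoeff : (A - D).charpoly.coeff (dBS c l) ≠ 0 := by
    have hdvd := h.X_pow_dBS_dvd_charpoly_sub hA hD
    rw [← Matrix.charpoly_toLin'] at hdvd ⊢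
    refine charpoly_coeff_ne_zero_of_disjoint_ker hP hdisj ?_ hdvd
    have := h.eq_size hr hs
    rw [Nat.succ_mul] at hdim
    rw [Module.finrank_fintype_fun_eq_card, Fintype.card_fin]
    omega
  have hmul := h.coeff_charmatrixMinor_mul_det_corner hA hD
  refine left_ne_zero_of_mul (hmul.trans_ne (mul_ne_zero ?_ hcoeff))
  rcases Int.units_eq_one_or (Equiv.Perm.sign
    ((colEquiv h.add_size_first).symm.trans (rowEquiv h.add_size_first))) with hsign | hsign <;>
    simp [hsign]

lemma coeff_charmatrixMinor_eq_zero_iff (h : IsBlockIndexing l c m β)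
    (hA : IsStrictlyBlockLower β A) (hr : r = #{i ∈ Icc 1 l | c 1 < c i})
    (hs : s = (∑ i ∈ Icc 1 l with c i ≤ c 1, c i) - 2 * c 1) :
    (charmatrixMinor h.add_size_first A).coeff (dBS c l) = 0 ↔ (A ^ (r + 1)).rank < s + c 1 :=
  ⟨fun h0 => not_le.1 fun hle => h.coeff_charmatrixMinor_ne_zero hA hr hs hle h0,
    h.coeff_charmatrixMinor_eq_zero hA hr hs⟩

end IsBlockIndexing

section GenericPoint

variable {c : ℕ → ℕ} {l n m : ℕ}

lemma isStrictlyBlockLower_Xpt (ξ : Pos c n → ℂ) :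
    IsStrictlyBlockLower (fun a : Fin n => blk c (a.1 + 1)) (Xpt c n ξ) :=
  fun _ _ hij => dif_neg fun hlt => hlt.2.not_ge hij

lemma map_eval_genX (ξ : Pos c n → ℂ) : (genX c n).map (eval ξ) = Xpt c n ξ := by
  ext a b
  simp only [genX, Xpt, Matrix.map_apply, Matrix.of_apply]
  split_ifs <;> simp

lemma eval_BSf (h : m + c 1 = n) (ξ : Pos c n → ℂ) :
    eval ξ (BSf c l n m h) = (charmatrixMinor h (-Xpt c n ξ)).coeff (dBS c l) := by
  rw [BSf, charmatrixMinor, ← Polynomial.coeff_map, ← Polynomial.coe_mapRingHom, RingHom.map_det,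
    ← map_eval_genX]
  refine congrArg (fun N : Matrix (Fin m) (Fin m) (Polynomial ℂ) => N.det.coeff (dBS c l))
    (Matrix.ext fun i j => ?_)
  have hrow : Fin.cast h (i.addNat (c 1)) = rowEquiv h (Sum.inl i) := by ext; simp [add_comm]
  have hcol : Fin.castLE ((Nat.le_add_right m (c 1)).trans h.le) j = colEquiv h (Sum.inl j) := by
    ext; simp
  by_cases hij : rowEquiv h (Sum.inl i) = colEquiv h (Sum.inl j) <;>
    simp [Mmat, hrow, hcol, hij, add_comm]

lemma eval_BSf_eq_zero_iff {r s : ℕ}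
    (h : IsBlockIndexing l c m fun a : Fin n => blk c (a.1 + 1))
    (hr : r = #{i ∈ Icc 1 l | c 1 < c i})
    (hs : s = (∑ i ∈ Icc 1 l with c i ≤ c 1, c i) - 2 * c 1) (ξ : Pos c n → ℂ) :
    eval ξ (BSf c l n m h.add_size_first) = 0 ↔ (Xpt c n ξ ^ (r + 1)).rank < s + c 1 := by
  rw [eval_BSf, h.coeff_charmatrixMinor_eq_zero_iff (isStrictlyBlockLower_Xpt ξ).neg hr hs,
    rank_neg_pow]

end GenericPoint

section HomogeneousFactors

variable {ι A S : Type*} [DecidableEq ι] [AddMonoid ι] [Semiring A] [SetLike S A]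
  [AddSubmonoidClass S A] (𝒜 : ι → S) [GradedRing 𝒜] {a b : A} {d : ι}

lemma coe_decompose_mul_of_uniqueAdd [∀ i (x : 𝒜 i), Decidable (x ≠ 0)] {i j : ι}
    (hi : i ∈ (DirectSum.decompose 𝒜 a).support) (hj : j ∈ (DirectSum.decompose 𝒜 b).support)
    (hij : UniqueAdd (DirectSum.decompose 𝒜 a).support (DirectSum.decompose 𝒜 b).support i j) :
    (DirectSum.decompose 𝒜 (a * b) (i + j) : A) =
      DirectSum.decompose 𝒜 a i * DirectSum.decompose 𝒜 b j := by
  have hpair : {p ∈ (DirectSum.decompose 𝒜 a).support ×ˢ (DirectSum.decompose 𝒜 b).support |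
      p.1 + p.2 = i + j} = {(i, j)} := by
    ext ⟨i', j'⟩
    simp only [mem_filter, mem_product, mem_singleton, Prod.mk.injEq]
    constructor
    · exact fun hmem => hij hmem.1.1 hmem.1.2 hmem.2
    · rintro ⟨rfl, rfl⟩
      exact ⟨⟨hi, hj⟩, rfl⟩
  rw [DirectSum.decompose_mul, DirectSum.coe_mul_apply, hpair, sum_singleton]

lemma exists_homogeneous_of_mul_homogeneous [TwoUniqueSums ι] [NoZeroDivisors A] (hab : a * b ∈ 𝒜 d)
    (hne : a * b ≠ 0) : ∃ i, a ∈ 𝒜 i := by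
  classical
  set s := (DirectSum.decompose 𝒜 a).support with hs
  set t := (DirectSum.decompose 𝒜 b).support
  have hdegree : ∀ i ∈ s, ∀ j ∈ t, UniqueAdd s t i j → i + j = d := by
    intro i hi j hj hij
    by_contra hd
    have hmul := coe_decompose_mul_of_uniqueAdd 𝒜 hi hj hij
    rw [DirectSum.decompose_of_mem_ne 𝒜 hab (Ne.symm hd)] at hmul
    rcases mul_eq_zero.1 hmul.symm with h0 | h0
    · exact DFinsupp.mem_support_iff.1 hi (Subtype.ext h0)
    · exact DFinsupp.mem_support_iff.1 hj (Subtype.ext h0)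
  have hsupport : ∀ x : A, x ≠ 0 → 0 < #(DirectSum.decompose 𝒜 x).support := fun x hx => by
    rw [card_pos, nonempty_iff_ne_empty, Ne, DFinsupp.support_eq_empty,
      ← DirectSum.decompose_zero 𝒜, (DirectSum.decompose 𝒜).injective.eq_iff]
    exact hx
  have hcards : 0 < #s := hsupport a (left_ne_zero_of_mul hne)
  have hcardt : 0 < #t := hsupport b (right_ne_zero_of_mul hne)
  have hcard : #s * #t ≤ 1 := by
    by_contra! hlt
    obtain ⟨p, hp, q, hq, hpq, hpuniq, hquniq⟩ := TwoUniqueSums.uniqueAdd_of_one_lt_card hlt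
    rw [mem_product] at hp hq
    have hsum := (hdegree _ hp.1 _ hp.2 hpuniq).trans (hdegree _ hq.1 _ hq.2 hquniq).symm
    exact hpq (Prod.ext_iff.2 (hquniq hp.1 hp.2 hsum))
  obtain ⟨i, hi⟩ := card_eq_one.1 (show #s = 1 by nlinarith)
  refine ⟨i, ?_⟩
  rw [← DirectSum.sum_support_decompose 𝒜 a, ← hs, hi, sum_singleton]
  exact SetLike.coe_mem _

variable {σ R M : Type*} [CommSemiring R] [AddCommMonoid M] {w : σ → M}
  {g : MvPolynomial σ R} {ω : M}

lemma exists_isWeightedHomogeneous_of_dvd [NoZeroDivisors R] [TwoUniqueSums M]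
    {f : MvPolynomial σ R} (hf : IsWeightedHomogeneous w f ω) (hf0 : f ≠ 0) (hgf : g ∣ f) :
    ∃ ν, IsWeightedHomogeneous w g ν := by
  classical
  obtain ⟨g', rfl⟩ := hgf
  let := weightedGradedAlgebra R w
  exact exists_homogeneous_of_mul_homogeneous (weightedHomogeneousSubmodule R w) hf hf0

lemma exists_weight_eq_of_eval_ne_zero (hg : IsWeightedHomogeneous w g ω) {ξ : σ → R}
    (hξ : eval ξ g ≠ 0) : ∃ μ : σ →₀ ℕ, Finsupp.weight w μ = ω ∧ ∀ p ∈ μ.support, ξ p ≠ 0 := by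
  rw [eval_eq] at hξ
  obtain ⟨μ, hμ, hne⟩ := exists_ne_zero_of_sum_ne_zero hξ
  refine ⟨μ, hg (mem_support_iff.1 hμ), fun p hp hp0 => hne ?_⟩
  rw [prod_eq_zero hp (by rw [hp0, zero_pow (Finsupp.mem_support_iff.1 hp)]), mul_zero]

lemma map_weight_eq_zero_of_eval_ne_zero {N : Type*} [AddCommMonoid N]
    (hg : IsWeightedHomogeneous w g ω) {ξ : σ → R} (hξ : eval ξ g ≠ 0) (φ : M →+ N)
    (hφ : ∀ p, ξ p ≠ 0 → φ (w p) = 0) : φ ω = 0 := by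
  obtain ⟨μ, rfl, hμ⟩ := exists_weight_eq_of_eval_ne_zero hg hξ
  rw [Finsupp.weight_apply, Finsupp.sum, map_sum]
  exact sum_eq_zero fun p hp => by rw [map_nsmul, hφ p (hμ p hp), smul_zero]

lemma map_weight_nonneg (hg : IsWeightedHomogeneous w g ω) (hg0 : g ≠ 0) (φ : M →+ ℤ)
    (hφ : ∀ p, 0 ≤ φ (w p)) : 0 ≤ φ ω := by
  obtain ⟨μ, hμ⟩ := support_nonempty.2 hg0
  rw [← hg (mem_support_iff.1 hμ), Finsupp.weight_apply, Finsupp.sum, map_sum]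
  exact sum_nonneg fun p _ => by rw [map_nsmul]; exact nsmul_nonneg (hφ p) _

lemma eq_C_of_isWeightedHomogeneous_zero (hg : IsWeightedHomogeneous w g 0) (φ : M →+ ℤ)
    (hφ : ∀ p, 0 < φ (w p)) : g = C (coeff 0 g) := by
  classical
  refine MvPolynomial.ext _ _ fun μ => ?_
  rw [coeff_C]
  split_ifs with hμ
  · rw [hμ]
  · by_contra hcoeff
    have hsum := congrArg φ (hg hcoeff)
    rw [Finsupp.weight_apply, Finsupp.sum, map_sum, map_zero,
      sum_eq_zero_iff_of_nonneg fun p _ => by rw [map_nsmul]; exact nsmul_nonneg (hφ p).le _]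
      at hsum
    refine hμ (Finsupp.ext fun p => ?_).symm
    by_contra hp
    have hpos := nsmul_pos (hφ p) hp
    rw [← map_nsmul, hsum p (Finsupp.mem_support_iff.2 hp)] at hpos
    exact hpos.false

variable {ι : Type*}

lemma isWeightedHomogeneous_coeff_prod {P : ι → Polynomial (MvPolynomial σ R)} {ν : ι → M}
    (s : Finset ι) (hP : ∀ i ∈ s, ∀ k, IsWeightedHomogeneous w ((P i).coeff k) (ν i)) (k : ℕ) :
    IsWeightedHomogeneous w ((∏ i ∈ s, P i).coeff k) (∑ i ∈ s, ν i) := by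
  classical
  induction s using Finset.induction_on generalizing k with
  | empty =>
    rw [prod_empty, sum_empty, Polynomial.coeff_one]
    split_ifs
    · exact isWeightedHomogeneous_one R w
    · exact isWeightedHomogeneous_zero R w 0
  | insert i s hi ih =>
    rw [prod_insert hi, sum_insert hi, Polynomial.coeff_mul]
    exact IsWeightedHomogeneous.sum _ _ _ fun ab _ => (hP i (mem_insert_self i s) _).mul
      (ih (fun j hj => hP j (mem_insert_of_mem hj)) _)

lemma isWeightedHomogeneous_coeff_det {R M : Type*} [CommRing R] [AddCommGroup M] {w : σ → M}
    [Fintype ι] [DecidableEq ι] {N : Matrix ι ι (Polynomial (MvPolynomial σ R))} {u v : ι → M}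
    (hN : ∀ i j k, IsWeightedHomogeneous w ((N i j).coeff k) (u i - v j)) (k : ℕ) :
    IsWeightedHomogeneous w (N.det.coeff k) (∑ i, u i - ∑ j, v j) := by
  rw [Matrix.det_apply, Polynomial.finsetSum_coeff]
  refine IsWeightedHomogeneous.sum _ _ _ fun τ _ => ?_
  have hprod := isWeightedHomogeneous_coeff_prod univ (fun j _ => hN (τ j) j) k
  rw [sum_sub_distrib, Equiv.sum_comp τ u] at hprod
  rw [Polynomial.coeff_smul]
  rcases Int.units_eq_one_or (Equiv.Perm.sign τ) with hτ | hτ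
  · rwa [hτ, one_smul]
  · rw [hτ, Units.neg_smul, one_smul]
    exact hprod.neg

end HomogeneousFactors

section RowLabellings

variable {ι : Type*} {c : ℕ → ℕ} {β ρ : ι → ℕ}

/-- `ρ` distributes the indices over rows so that distinct indices of a block lie in distinct
rows, where the block `i` has the rows `0, …, max (c 1) (c i) - 1` at its disposal. -/
structure IsRowLabelling (c : ℕ → ℕ) (β ρ : ι → ℕ) : Prop where
  eq_of_eq : ∀ ⦃a b⦄, β a = β b → ρ a = ρ b → a = b
  lt_max : ∀ a, ρ a < max (c 1) (c (β a))

lemma exists_isRowLabelling [Fintype ι] (hβ : ∀ a, #{b | β b = β a} = c (β a)) :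
    ∃ ρ, IsRowLabelling c β ρ ∧ ∀ a, ρ a < c (β a) := by
  let e (i : ℕ) := Fintype.equivFin {a // β a = i}
  have he : ∀ (a : ι) (i : ℕ) (ha : β a = i), (e (β a) ⟨a, rfl⟩).1 = (e i ⟨a, ha⟩).1 := by
    rintro a _ rfl
    rfl
  have hlt : ∀ a, (e (β a) ⟨a, rfl⟩).1 < c (β a) := fun a =>
    (e (β a) ⟨a, rfl⟩).2.trans_eq (by rw [Fintype.card_subtype, hβ])
  refine ⟨fun a => (e (β a) ⟨a, rfl⟩).1, ⟨fun a b hab hρ => ?_, fun a => ?_⟩, hlt⟩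
  · rw [he a (β b) hab] at hρ
    exact congrArg Subtype.val ((e (β b)).injective (Fin.ext hρ))
  · exact lt_max_of_lt_right (hlt a)

lemma IsRowLabelling.exists_apply_eq (hρ : IsRowLabelling c β ρ) {v : ι} {j : ℕ}
    (hj : j < max (c 1) (c (β v))) :
    ∃ ρ', IsRowLabelling c β ρ' ∧ ρ' v = j ∧ ∀ a, β a ≠ β v → ρ' a = ρ a := by
  refine ⟨fun a => if β a = β v then Equiv.swap (ρ v) j (ρ a) else ρ a, ⟨fun a b hab h => ?_,
    fun a => ?_⟩, by simp, fun a ha => if_neg ha⟩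
  · simp only [hab] at h
    split_ifs at h with hb
    · exact hρ.eq_of_eq hab ((Equiv.injective _) h)
    · exact hρ.eq_of_eq hab h
  · have ha := hρ.lt_max a
    have hv := hρ.lt_max v
    by_cases hav : β a = β v
    · rw [hav] at ha ⊢
      simp only [if_true, Equiv.swap_apply_def]
      split_ifs <;> assumption
    · rwa [if_neg hav]

/-- The matrix with entry `1` at each position strictly below the diagonal blocks whose two indices
lie in the same one of the rows `0, …, k - 1`. -/
def rowMatrix (K : Type*) [Field K] (β ρ : ι → ℕ) (k : ℕ) : Matrix ι ι K :=
  Matrix.of fun a b => if β b < β a ∧ ρ a = ρ b ∧ ρ b < k then 1 else 0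

variable {K : Type*} [Field K] {k l : ℕ}

lemma isStrictlyBlockLower_rowMatrix : IsStrictlyBlockLower β (rowMatrix K β ρ k) :=
  fun _ _ hab => if_neg fun h => h.1.not_ge hab

variable [Fintype ι] [DecidableEq ι]

lemma map_rowMatrix_le :
    (coordSubspace K {a | ρ a < k}).map (Matrix.toLin' (rowMatrix K β ρ k)) ≤
      coordSubspace K {a | ρ a < k} := by
  rintro _ ⟨v, -, rfl⟩
  refine mem_coordSubspace.2 fun a ha => sum_eq_zero fun b _ => ?_
  rw [mem_filter_univ] at ha
  exact (congrArg (· * v b) (if_neg (by omega))).trans (zero_mul _)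

-- A kernel vector vanishes at an index outside the block `l`, by induction on the block of that
-- index: compare with its successor in the same row.
lemma coordSubspace_inf_ker_rowMatrix_le (hρ : ∀ ⦃a b⦄, β a = β b → ρ a = ρ b → a = b)
    (hβ : ∀ a, β a ≤ l) (hl : ∀ j < k, ∃ a, β a = l ∧ ρ a = j) :
    coordSubspace K {a | ρ a < k} ⊓ LinearMap.ker (Matrix.toLin' (rowMatrix K β ρ k)) ≤
      coordSubspace K {a | β a = l} := by
  rintro v ⟨hv, hker⟩
  rw [mem_coordSubspace]
  intro b hb
  rw [mem_filter_univ] at hb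
  induction hi : β b using Nat.strong_induction_on generalizing b with
  | _ i ih =>
    by_cases hbk : ρ b < k
    · obtain ⟨z, hz, hzb⟩ := hl _ hbk
      obtain ⟨a, ha, hmin⟩ := exists_min_image {a | ρ a = ρ b ∧ β b < β a} β
        ⟨z, (mem_filter_univ z).2 ⟨hzb, hz ▸ (hβ b).lt_of_ne hb⟩⟩
      rw [mem_filter_univ] at ha
      have hsum : ∑ b', rowMatrix K β ρ k a b' * v b' = v b := by
        rw [sum_eq_single b _ fun hmem => absurd (mem_univ b) hmem]
        · rw [rowMatrix, Matrix.of_apply, if_pos ⟨ha.2, ha.1, hbk⟩, one_mul]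
        · intro b' _ hb'
          by_cases hab' : β b' < β a ∧ ρ a = ρ b' ∧ ρ b' < k
          · have hle : β b' ≤ β b := by
              by_contra! hlt
              exact hab'.1.not_ge (hmin b'
                ((mem_filter_univ b').2 ⟨hab'.2.1.symm.trans ha.1, hlt⟩))
            have hne : β b' ≠ β b := fun h => hb' (hρ h (hab'.2.1.symm.trans ha.1))
            have hbl := hβ b
            rw [ih (β b') (by omega) b' (by omega) rfl, mul_zero]
          · rw [rowMatrix, Matrix.of_apply, if_neg hab', zero_mul]
      exact hsum.symm.trans (congrFun hker a)
    · exact mem_coordSubspace.1 hv b (by simpa using hbk)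

lemma card_le_rank_rowMatrix_pow_add (hρ : ∀ ⦃a b⦄, β a = β b → ρ a = ρ b → a = b)
    (hβ : ∀ a, β a ≤ l) (hl : ∀ j < k, ∃ a, β a = l ∧ ρ a = j) (r : ℕ) :
    #{a | ρ a < k} ≤ (rowMatrix K β ρ k ^ r).rank + r * #{a | β a = l} := by
  have hpow := finrank_le_finrank_map_pow_add
    (map_rowMatrix_le (K := K) (β := β) (ρ := ρ) (k := k)) r
  have hker := Submodule.finrank_mono (coordSubspace_inf_ker_rowMatrix_le (K := K) hρ hβ hl)
  have hrange := Submodule.finrank_mono (LinearMap.map_le_range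
    (f := Matrix.toLin' (rowMatrix K β ρ k) ^ r) (p := coordSubspace K {a | ρ a < k}))
  rw [finrank_coordSubspace] at hpow hker
  rw [rank_pow_eq_finrank_range_toLin']
  exact hpow.trans (add_le_add hrange (Nat.mul_le_mul_left r hker))

end RowLabellings

namespace IsBlockIndexing

variable {l : ℕ} {c : ℕ → ℕ} {n m : ℕ} {β ρ : Fin n → ℕ}

lemma card_size_first_le_row_le (h : IsBlockIndexing l c m β) (hρ : IsRowLabelling c β ρ) :
    #{a | c 1 ≤ ρ a} ≤ dBS c l := by
  rw [card_eq_sum_card_fiberwise (f := β) (t := Icc 1 l) fun a _ => h.mem_Icc a, dBS]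
  refine sum_le_sum fun i _ => ?_
  rw [filter_filter, ← Nat.card_Ico]
  refine card_le_card_of_injOn ρ (fun a ha => ?_) fun a ha b hb hab => ?_
  · have hlt := hρ.lt_max a
    grind
  · simp only [coe_filter, mem_univ, true_and, Set.mem_ofPred_eq] at ha hb
    exact hρ.eq_of_eq (ha.2.trans hb.2.symm) hab

lemma exists_last_row_eq (h : IsBlockIndexing l c m β) (hρ : IsRowLabelling c β ρ) {j : ℕ}
    (hj : j < c 1) : ∃ a, β a = l ∧ ρ a = j := by
  have himage : ({a | β a = l} : Finset (Fin n)).image ρ = range (c 1) := by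
    refine eq_of_subset_of_card_le (fun i hi => ?_) ?_
    · obtain ⟨a, ha, rfl⟩ := mem_image.1 hi
      have hlt := hρ.lt_max a
      rwa [(mem_filter_univ a).1 ha, h.size_last, max_self, ← mem_range] at hlt
    · rw [card_range, card_image_of_injOn, h.card_eq l h.last_mem_Icc, h.size_last]
      intro a ha b hb hab
      simp only [coe_filter, mem_univ, true_and, Set.mem_ofPred_eq] at ha hb
      exact hρ.eq_of_eq (ha.trans hb.symm) hab
  simpa using himage.ge (mem_range.2 hj)

lemma le_rank_rowMatrix_pow (h : IsBlockIndexing l c m β) (hρ : IsRowLabelling c β ρ) {r s : ℕ}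
    (hr : r = #{i ∈ Icc 1 l | c 1 < c i})
    (hs : s = (∑ i ∈ Icc 1 l with c i ≤ c 1, c i) - 2 * c 1) (K : Type*) [Field K] :
    s + c 1 ≤ (rowMatrix K β ρ (c 1) ^ (r + 1)).rank := by
  have hrank := card_le_rank_rowMatrix_pow_add (K := K) hρ.eq_of_eq
    (fun a => (Finset.mem_Icc.1 (h.mem_Icc a)).2) (fun j hj => h.exists_last_row_eq hρ hj) (r + 1)
  have hsplit := card_filter_add_card_filter_not (s := univ) fun a => ρ a < c 1
  simp only [not_lt, card_univ, Fintype.card_fin] at hsplit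
  rw [h.card_eq l h.last_mem_Icc, h.size_last, Nat.succ_mul] at hrank
  have := h.card_size_first_le_row_le hρ
  have := h.eq_size hr hs
  omega

end IsBlockIndexing

section BalancedWeights

/-- For every row labelling, the sums of `ω` over the rows `0, …, c 1 - 1` vanish, and so do its
values at the indices in the other rows: the sets `S` are the unions of such rows and indices. -/
def IsRowBalanced {ι : Type*} (c : ℕ → ℕ) (β : ι → ℕ) (ω : ι → ℤ) : Prop :=
  ∀ ρ, IsRowLabelling c β ρ → ∀ S : Finset ι,
    (∀ a b, ρ a = ρ b → ρ b < c 1 → (a ∈ S ↔ b ∈ S)) → ∑ v ∈ S, ω v = 0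

variable {l : ℕ} {c : ℕ → ℕ} {n m : ℕ} {β : Fin n → ℕ} {ω : Fin n → ℤ}

lemma IsRowBalanced.apply_eq_zero_of_size_first_le {ι : Type*} {β ρ : ι → ℕ} {ω : ι → ℤ}
    (hω : IsRowBalanced c β ω) (hρ : IsRowLabelling c β ρ) {v : ι} (hv : c 1 ≤ ρ v) : ω v = 0 := by
  rw [← sum_singleton ω v]
  exact hω ρ hρ {v} fun a b hab hb => by
    simp only [mem_singleton]
    constructor <;> rintro rfl <;> omega

lemma IsRowBalanced.sum_row_eq_zero {ι : Type*} [Fintype ι] {β ρ : ι → ℕ} {ω : ι → ℤ}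
    (hω : IsRowBalanced c β ω) (hρ : IsRowLabelling c β ρ) (j : ℕ) : ∑ v with ρ v = j, ω v = 0 :=
  hω ρ hρ _ fun a b hab _ => by simp only [mem_filter_univ, hab]

namespace IsBlockIndexing

lemma exists_isRowLabelling (h : IsBlockIndexing l c m β) :
    ∃ ρ, IsRowLabelling c β ρ ∧ ∀ a, ρ a < c (β a) :=
  _root_.exists_isRowLabelling fun a => h.card_eq (β a) (h.mem_Icc a)

-- In a block of size less than `c 1`, moving `v` into the free row `c (β v)` changes the sum over
-- that row by `ω v`.
lemma apply_eq_zero_of_isRowBalanced (h : IsBlockIndexing l c m β) (hω : IsRowBalanced c β ω)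
    {v : Fin n} (hv : c (β v) ≠ c 1) : ω v = 0 := by
  obtain ⟨ρ, hρ, hlt⟩ := h.exists_isRowLabelling
  rcases hv.lt_or_gt with hsmall | hlarge
  · obtain ⟨ρ', hρ', hρ'v, hρ'ne⟩ := hρ.exists_apply_eq (lt_max_of_lt_left hsmall)
    have hinsert : ({a | ρ' a = c (β v)} : Finset (Fin n)) =
        insert v ({a | ρ a = c (β v)} : Finset (Fin n)) := by
      ext a
      simp only [mem_filter_univ, mem_insert]
      by_cases ha : β a = β v
      · have hav : ρ' a = c (β v) ↔ a = v :=
          ⟨fun hρa => hρ'.eq_of_eq ha (hρa.trans hρ'v.symm), fun hav => hav ▸ hρ'v⟩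
        simp [hav, (ha ▸ hlt a).ne]
      · have hav : a ≠ v := fun hav => ha (hav ▸ rfl)
        simp [hρ'ne a ha, hav]
    have hsum := hω.sum_row_eq_zero hρ' (c (β v))
    rwa [hinsert, sum_insert (by simpa using (hlt v).ne), hω.sum_row_eq_zero hρ, add_zero] at hsum
  · obtain ⟨ρ', hρ', hρ'v, -⟩ := hρ.exists_apply_eq (lt_max_of_lt_right hlarge)
    exact hω.apply_eq_zero_of_size_first_le hρ' hρ'v.ge

lemma apply_first_add_apply_last_of_isRowBalanced (h : IsBlockIndexing l c m β)
    (hcne : ∀ j, 1 < j → j < l → c j ≠ c 1) (hω : IsRowBalanced c β ω) {a b : Fin n}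
    (ha : β a = 1) (hb : β b = l) : ω a + ω b = 0 := by
  have hl := h.two_le
  have hba : β a ≠ β b := by omega
  obtain ⟨ρ, hρ, hlt⟩ := h.exists_isRowLabelling
  obtain ⟨ρ', hρ', hρ'b, hρ'ne⟩ := hρ.exists_apply_eq (v := b) (j := ρ a)
    (lt_max_of_lt_left (ha ▸ hlt a))
  have hρ'a := hρ'ne a hba
  rw [← hω.sum_row_eq_zero hρ' (ρ a)]
  refine (sum_eq_add a b (fun hab => hba (congrArg β hab)) (fun v hv hne => ?_)
    (fun hmem => (hmem ((mem_filter_univ a).2 hρ'a)).elim)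
    fun hmem => (hmem ((mem_filter_univ b).2 hρ'b)).elim).symm
  rw [mem_filter_univ] at hv
  have hv1 : β v ≠ 1 := fun hv1 => hne.1 (hρ'.eq_of_eq (hv1.trans ha.symm) (hv.trans hρ'a.symm))
  have hvl : β v ≠ l := fun hvl => hne.2 (hρ'.eq_of_eq (hvl.trans hb.symm) (hv.trans hρ'b.symm))
  have hIcc := Finset.mem_Icc.1 (h.mem_Icc v)
  exact h.apply_eq_zero_of_isRowBalanced hω (hcne _ (by omega) (by omega))

lemma eq_zero_of_isRowBalanced (h : IsBlockIndexing l c m β)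
    (hcne : ∀ j, 1 < j → j < l → c j ≠ c 1) (hω : IsRowBalanced c β ω) {b : Fin n}
    (hb : β b = l) (hωb : ω b = 0) : ω = 0 := by
  have hfirst : ∀ a, β a = 1 → ω a = 0 := fun a ha => by
    have := h.apply_first_add_apply_last_of_isRowBalanced hcne hω ha hb
    omega
  have hpos := h.pos
  have hsize := h.add_size_first
  have hz : β ⟨0, by omega⟩ = 1 := (h.eq_one_iff _).2 hpos
  funext v
  by_cases hv1 : β v = 1
  · exact hfirst v hv1
  by_cases hvl : β v = l
  · have hsum := h.apply_first_add_apply_last_of_isRowBalanced hcne hω hz hvl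
    rwa [hfirst _ hz, zero_add] at hsum
  have hIcc := Finset.mem_Icc.1 (h.mem_Icc v)
  exact h.apply_eq_zero_of_isRowBalanced hω (hcne _ (by omega) (by omega))

end IsBlockIndexing

end BalancedWeights

section Irreducibility

variable {c : ℕ → ℕ} {l n m : ℕ}

lemma Xpt_eq (h : IsBlockIndexing l c m fun a : Fin n => blk c (a.1 + 1))
    {A : Matrix (Fin n) (Fin n) ℂ}
    (hA : IsStrictlyBlockLower (fun a : Fin n => blk c (a.1 + 1)) A) :
    Xpt c n (fun p => A p.1.1 p.1.2) = A := by
  ext a b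
  rw [Xpt, Matrix.of_apply]
  split_ifs with hab
  · rfl
  · refine (hA a b ?_).symm
    by_contra! hlt
    have hba := lt_of_blk_lt (Finset.mem_Icc.1 (h.mem_Icc b)).1 hlt
    exact hab ⟨Fin.lt_def.2 (by omega), hlt⟩

lemma eval_BSf_rowMatrix_ne_zero {ρ : Fin n → ℕ}
    (h : IsBlockIndexing l c m fun a : Fin n => blk c (a.1 + 1))
    (hρ : IsRowLabelling c (fun a : Fin n => blk c (a.1 + 1)) ρ) :
    eval (fun p : Pos c n => rowMatrix ℂ (fun a : Fin n => blk c (a.1 + 1)) ρ (c 1) p.1.1 p.1.2)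
      (BSf c l n m h.add_size_first) ≠ 0 := by
  rw [Ne, eval_BSf_eq_zero_iff h rfl rfl, Xpt_eq h isStrictlyBlockLower_rowMatrix, not_lt]
  exact h.le_rank_rowMatrix_pow hρ rfl rfl ℂ

lemma exists_eval_BSf_ne_zero (h : IsBlockIndexing l c m fun a : Fin n => blk c (a.1 + 1)) :
    ∃ ξ, eval ξ (BSf c l n m h.add_size_first) ≠ 0 := by
  obtain ⟨ρ, hρ, -⟩ := h.exists_isRowLabelling
  exact ⟨_, eval_BSf_rowMatrix_ne_zero h hρ⟩

lemma sum_single_apply_of_injective {ι κ : Type*} [Fintype ι] [DecidableEq κ] {f : ι → κ}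
    (hf : f.Injective) (b : κ) [Decidable (b ∈ Set.range f)] :
    (∑ i, Pi.single (f i) 1 : κ → ℤ) b = if b ∈ Set.range f then 1 else 0 := by
  rw [Finset.sum_apply]
  split_ifs with hb
  · obtain ⟨i, rfl⟩ := hb
    rw [sum_eq_single i (fun j _ hj => Pi.single_eq_of_ne (hf.ne hj).symm 1)
      fun hmem => absurd (mem_univ i) hmem, Pi.single_eq_same]
  · exact sum_eq_zero fun i _ => Pi.single_eq_of_ne (fun hbi => hb ⟨i, hbi.symm⟩) 1

/-- The weight of the coordinate at the position `(a, b)` under the conjugation action of the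
diagonal torus. -/
def rootWeight (p : Pos c n) : Fin n → ℤ := Pi.single p.1.1 1 - Pi.single p.1.2 1

lemma sum_rootWeight (p : Pos c n) (S : Finset (Fin n)) :
    ∑ v ∈ S, rootWeight p v = (if p.1.1 ∈ S then 1 else 0) - if p.1.2 ∈ S then 1 else 0 := by
  simp [rootWeight, sum_sub_distrib, sum_pi_single']

lemma isWeightedHomogeneous_genX (a b : Fin n) :
    IsWeightedHomogeneous rootWeight (genX c n a b) (Pi.single a 1 - Pi.single b 1) := by
  rw [genX, Matrix.of_apply]
  split_ifs with hab
  · exact isWeightedHomogeneous_X ℂ rootWeight ⟨(a, b), hab⟩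
  · exact isWeightedHomogeneous_zero ℂ rootWeight _

lemma isWeightedHomogeneous_coeff_Mmat (h : m + c 1 = n) (i j : Fin m) (k : ℕ) :
    IsWeightedHomogeneous rootWeight ((Mmat c n m h i j).coeff k)
      (Pi.single (Fin.cast h (i.addNat (c 1))) 1 -
        Pi.single (Fin.castLE ((Nat.le_add_right m (c 1)).trans h.le) j) 1) := by
  rw [Mmat, Matrix.of_apply, Polynomial.coeff_add]
  refine IsWeightedHomogeneous.add ?_ ?_
  · rw [Polynomial.coeff_C]
    split_ifs
    · exact isWeightedHomogeneous_genX _ _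
    · exact isWeightedHomogeneous_zero ℂ rootWeight _
  · split_ifs with hij
    · rw [hij, sub_self, Polynomial.coeff_X]
      split_ifs
      · exact isWeightedHomogeneous_one ℂ rootWeight
      · exact isWeightedHomogeneous_zero ℂ rootWeight _
    · exact isWeightedHomogeneous_zero ℂ rootWeight _

lemma isWeightedHomogeneous_BSf (h : m + c 1 = n) :
    IsWeightedHomogeneous rootWeight (BSf c l n m h)
      fun b => (if c 1 ≤ b.1 then 1 else 0) - if b.1 < m then 1 else 0 := by
  classical
  have hdet := isWeightedHomogeneous_coeff_det (isWeightedHomogeneous_coeff_Mmat h) (dBS c l)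
  refine (congrArg (IsWeightedHomogeneous rootWeight (BSf c l n m h)) (funext fun b => ?_)).mpr hdet
  have hrow : (b ∈ Set.range fun i : Fin m => Fin.cast h (i.addNat (c 1))) ↔ c 1 ≤ b.1 := by
    refine ⟨?_, fun hb => ⟨⟨b.1 - c 1, by omega⟩, Fin.ext (Nat.sub_add_cancel hb)⟩⟩
    rintro ⟨i, rfl⟩
    exact Nat.le_add_left (c 1) i
  have hcol : (b ∈ Set.range (Fin.castLE ((Nat.le_add_right m (c 1)).trans h.le))) ↔ b.1 < m := by
    refine ⟨?_, fun hb => ⟨⟨b.1, hb⟩, rfl⟩⟩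
    rintro ⟨j, rfl⟩
    exact j.2
  rw [Pi.sub_apply, sum_single_apply_of_injective (f := fun i : Fin m => Fin.cast h (i.addNat _))
    ((Fin.cast_injective h).comp (Fin.strictMono_addNat _).injective),
    sum_single_apply_of_injective (Fin.castLE_injective _)]
  simp only [hrow, hcol]

variable {g : MvPolynomial (Pos c n) ℂ} {ω : Fin n → ℤ}

lemma isRowBalanced_of_dvd_BSf (h : IsBlockIndexing l c m fun a : Fin n => blk c (a.1 + 1))
    (hg : IsWeightedHomogeneous rootWeight g ω) (hdvd : g ∣ BSf c l n m h.add_size_first) :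
    IsRowBalanced c (fun a : Fin n => blk c (a.1 + 1)) ω := by
  intro ρ hρ S hS
  have hev := ne_zero_of_dvd_ne_zero (eval_BSf_rowMatrix_ne_zero h hρ) (map_dvd (eval _) hdvd)
  have hsum := map_weight_eq_zero_of_eval_ne_zero hg hev
    (∑ v ∈ S, Pi.evalAddMonoidHom (fun _ => ℤ) v) fun p hp => ?_
  · simpa using hsum
  · have hrow : ρ p.1.1 = ρ p.1.2 ∧ ρ p.1.2 < c 1 := by
      by_contra hrow
      exact hp (if_neg fun hpos => hrow hpos.2)
    simpa [hS _ _ hrow.1 hrow.2] using sum_rootWeight p S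

lemma apply_last_nonneg_of_isWeightedHomogeneous
    (h : IsBlockIndexing l c m fun a : Fin n => blk c (a.1 + 1))
    (hg : IsWeightedHomogeneous rootWeight g ω) (hg0 : g ≠ 0) {b : Fin n}
    (hb : blk c (b.1 + 1) = l) : 0 ≤ ω b := by
  refine map_weight_nonneg hg hg0 (Pi.evalAddMonoidHom (fun _ => ℤ) b) fun p => ?_
  have hpb : b ≠ p.1.2 := by
    intro hpb
    have hle := (Finset.mem_Icc.1 (h.mem_Icc p.1.1)).2
    exact hle.not_gt (hb ▸ hpb ▸ p.2.2)
  rw [Pi.evalAddMonoidHom_apply, rootWeight, Pi.sub_apply, Pi.single_eq_of_ne hpb, sub_zero,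
    Pi.single_apply]
  split_ifs <;> decide

lemma isUnit_of_isWeightedHomogeneous_zero (hg : IsWeightedHomogeneous rootWeight g 0)
    (hg0 : g ≠ 0) : IsUnit g := by
  have hC := eq_C_of_isWeightedHomogeneous_zero hg
    (∑ v : Fin n, (v.1 : ℤ) • Pi.evalAddMonoidHom (fun _ => ℤ) v) fun p => by
      simpa [rootWeight, mul_sub, sum_sub_distrib, Pi.single_apply] using p.2.1
  rw [hC] at hg0 ⊢
  exact (isUnit_iff_ne_zero.2 fun h0 => hg0 (by rw [h0, C_0])).map C

lemma isUnit_of_dvd_BSf (h : IsBlockIndexing l c m fun a : Fin n => blk c (a.1 + 1))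
    (hcne : ∀ j, 1 < j → j < l → c j ≠ c 1) (hg : IsWeightedHomogeneous rootWeight g ω)
    (hdvd : g ∣ BSf c l n m h.add_size_first) {b : Fin n} (hb : blk c (b.1 + 1) = l)
    (hωb : ω b = 0) : IsUnit g := by
  obtain ⟨ξ, hξ⟩ := exists_eval_BSf_ne_zero h
  have hω := h.eq_zero_of_isRowBalanced hcne (isRowBalanced_of_dvd_BSf h hg hdvd) hb hωb
  refine isUnit_of_isWeightedHomogeneous_zero (hω ▸ hg) ?_
  exact ne_zero_of_dvd_ne_zero (fun h0 => hξ (by rw [h0, map_zero])) hdvd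

lemma eval_zero_BSf (h : IsBlockIndexing l c m fun a : Fin n => blk c (a.1 + 1)) :
    eval 0 (BSf c l n m h.add_size_first) = 0 := by
  rw [eval_BSf_eq_zero_iff h rfl rfl]
  have hX : Xpt c n 0 = 0 := by
    ext a b
    simp [Xpt]
  rw [hX, zero_pow (Nat.succ_ne_zero _), Matrix.rank_zero]
  exact Nat.add_pos_right _ h.pos

-- Every factor is homogeneous for the torus weights. At an index `b` of the last block the weights
-- of factors are nonnegative, while that of `f` is `1`: one of two factors has weight `0` at `b`.
lemma irreducible_BSf (h : IsBlockIndexing l c m fun a : Fin n => blk c (a.1 + 1))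
    (hcne : ∀ j, 1 < j → j < l → c j ≠ c 1) : Irreducible (BSf c l n m h.add_size_first) := by
  obtain ⟨ξ, hξ⟩ := exists_eval_BSf_ne_zero h
  have hf0 : BSf c l n m h.add_size_first ≠ 0 := fun h0 => hξ (by rw [h0, map_zero])
  have hf := isWeightedHomogeneous_BSf (l := l) h.add_size_first
  refine ⟨fun hunit => (hunit.map (eval 0)).ne_zero (eval_zero_BSf h), fun g₁ g₂ hfg => ?_⟩
  obtain ⟨ω₁, hω₁⟩ := exists_isWeightedHomogeneous_of_dvd hf hf0 (Dvd.intro g₂ hfg.symm)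
  obtain ⟨ω₂, hω₂⟩ := exists_isWeightedHomogeneous_of_dvd hf hf0 (Dvd.intro_left g₁ hfg.symm)
  have hsize := h.add_size_first
  have hpos := h.pos
  let b : Fin n := ⟨m, by omega⟩
  have hb : blk c (b.1 + 1) = l := (h.eq_last_iff b).2 le_rfl
  have hsum := congrFun (IsWeightedHomogeneous.inj_right hf0 (hfg ▸ hω₁.mul hω₂) hf) b
  rw [if_pos h.size_first_le, if_neg (lt_irrefl m), Pi.add_apply] at hsum
  have h₁ := apply_last_nonneg_of_isWeightedHomogeneous h hω₁ (left_ne_zero_of_mul (hfg ▸ hf0)) hb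
  have h₂ := apply_last_nonneg_of_isWeightedHomogeneous h hω₂ (right_ne_zero_of_mul (hfg ▸ hf0)) hb
  rcases h₁.eq_or_lt with h₁ | h₁
  · exact Or.inl (isUnit_of_dvd_BSf h hcne hω₁ (Dvd.intro g₂ hfg.symm) hb h₁.symm)
  · exact Or.inr (isUnit_of_dvd_BSf h hcne hω₂ (Dvd.intro_left g₁ hfg.symm) hb (by omega))

end Irreducibility

section ColumnDeletion

variable {n R K : Type*} [Ring R] [Field K] [Fintype n] [DecidableEq n]

lemma rank_le_rank_mul_one_sub_single_add_one (A : Matrix n n K) (z : n) :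
    A.rank ≤ (A * (1 - Matrix.single z z (1 : K))).rank + 1 := by
  have hsingle : (Matrix.single z z (1 : K)).rank ≤ 1 := by
    rw [Matrix.single_eq_single_vecMulVec_single]
    exact Matrix.rank_vecMulVec_le _ _
  calc A.rank = (A * (1 - Matrix.single z z (1 : K)) + A * Matrix.single z z 1).rank := by
        rw [← mul_add, sub_add_cancel, mul_one]
    _ ≤ (A * (1 - Matrix.single z z (1 : K))).rank + (A * Matrix.single z z 1).rank :=
        rank_add_le_rank_add_rank _ _
    _ ≤ (A * (1 - Matrix.single z z (1 : K))).rank + 1 :=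
        Nat.add_le_add_left ((Matrix.rank_mul_le_right _ _).trans hsingle) _

lemma mul_one_sub_single_apply (A : Matrix n n R) (z i j : n) :
    (A * (1 - Matrix.single z z (1 : R)) : Matrix n n R) i j = if j = z then 0 else A i j := by
  rw [mul_sub, mul_one, Matrix.sub_apply]
  split_ifs with hj
  · rw [hj, Matrix.mul_single_apply_same, mul_one, sub_self]
  · rw [Matrix.mul_single_apply_of_ne _ _ _ _ _ hj, sub_zero]

lemma one_sub_single_mul (A : Matrix n n R) {z : n} (hz : ∀ j, A z j = 0) :
    (1 - Matrix.single z z (1 : R)) * A = A := by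
  rw [sub_mul, one_mul, sub_eq_self]
  ext i j
  by_cases hi : i = z
  · rw [hi, Matrix.single_mul_apply_same, hz, mul_zero, Matrix.zero_apply]
  · rw [Matrix.single_mul_apply_of_ne _ _ _ _ _ hi, Matrix.zero_apply]

lemma mul_pow_succ_of_mul_eq {M : Type*} [Monoid M] {a q : M} (hqa : q * a = a) (k : ℕ) :
    (a * q) ^ (k + 1) = a ^ (k + 1) * q := by
  induction k with
  | zero => rw [zero_add, pow_one, pow_one]
  | succ k ih => rw [pow_succ, ih, pow_succ a (k + 1), mul_assoc, ← mul_assoc q, hqa, mul_assoc]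

lemma charmatrixMinor_eq_zero_of_col_eq_zero {R : Type*} [CommRing R] {n m k : ℕ} (h : m + k = n)
    {A : Matrix (Fin n) (Fin n) R} {z : Fin n} (hzm : z.1 < m) (hzk : z.1 < k)
    (hA : ∀ i, A i z = 0) : charmatrixMinor h A = 0 := by
  refine Matrix.det_eq_zero_of_column_eq_zero ⟨z.1, hzm⟩ fun i => ?_
  have hcol : colEquiv h (Sum.inl ⟨z.1, hzm⟩) = z := Fin.ext (by simp)
  have hrow : rowEquiv h (Sum.inl i) ≠ z := Fin.ne_of_val_ne (by rw [val_rowEquiv_inl]; omega)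
  simp [hcol, Matrix.charmatrix_apply_ne _ _ _ hrow, hA]

end ColumnDeletion

section GenericBoundaryPoint

variable {c : ℕ → ℕ} {l n m r s : ℕ}

-- The point is obtained from a point outside the hypersurface by deleting the first column.
lemma exists_eval_BSf_eq_zero_le_rank
    (h : IsBlockIndexing l c m fun a : Fin n => blk c (a.1 + 1))
    (hr : r = #{i ∈ Icc 1 l | c 1 < c i})
    (hs : s = (∑ i ∈ Icc 1 l with c i ≤ c 1, c i) - 2 * c 1) :
    ∃ ξ, eval ξ (BSf c l n m h.add_size_first) = 0 ∧
      s + c 1 ≤ (Xpt c n ξ ^ (r + 1)).rank + 1 := by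
  obtain ⟨ξ, hξ⟩ := exists_eval_BSf_ne_zero h
  rw [Ne, eval_BSf_eq_zero_iff h hr hs, not_lt] at hξ
  have hpos := h.pos
  have hsize := h.add_size_first
  have hfirst := h.size_first_le
  let z : Fin n := ⟨0, by omega⟩
  set A := Xpt c n ξ
  set B : Matrix (Fin n) (Fin n) ℂ := A * (1 - Matrix.single z z (1 : ℂ))
  have hA : IsStrictlyBlockLower (fun a : Fin n => blk c (a.1 + 1)) A := isStrictlyBlockLower_Xpt ξ
  have hB : IsStrictlyBlockLower (fun a : Fin n => blk c (a.1 + 1)) B := fun i j hij =>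
    (mul_one_sub_single_apply A z i j).trans (by rw [hA i j hij, ite_self])
  have hrow : ∀ j, A z j = 0 := fun j => hA z j
    (((h.eq_one_iff z).2 hpos).trans_le (Finset.mem_Icc.1 (h.mem_Icc j)).1)
  refine ⟨fun p => B p.1.1 p.1.2, ?_, ?_⟩
  · rw [eval_BSf, Xpt_eq h hB, charmatrixMinor_eq_zero_of_col_eq_zero (z := z) _
      (hpos.trans_le hfirst) hpos fun i => by simp [B, mul_one_sub_single_apply],
      Polynomial.coeff_zero]
  · rw [Xpt_eq h hB, mul_pow_succ_of_mul_eq (one_sub_single_mul A hrow)]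
    exact hξ.trans (rank_le_rank_mul_one_sub_single_add_one _ z)

end GenericBoundaryPoint

/-- **Benlolo–Sanderson conjecture** (Theorem 2.19 (i) / 3.16):  the vanishing ideal of
`V = {ξ : P → ℂ | rank (X(ξ)^(r+1)) = s + c - 1}` is the principal ideal generated by the
Benlolo–Sanderson element `f`. -/
theorem vanishing_ideal_of_hypersurface_orbital_variety_eq_span_BS
    (l : ℕ) (hl : 2 ≤ l) (c : ℕ → ℕ) (hc : ∀ i ∈ Finset.Icc 1 l, 0 < c i)
    (hcl : c l = c 1) (n : ℕ) (hn : n = blkSum c l) (m : ℕ) (hm : m + c 1 = n)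
    (hcne : ∀ j, 1 < j → j < l → c j ≠ c 1)
    (r s : ℕ) (hr : r = ((Finset.Icc 1 l).filter fun i => c 1 < c i).card)
    (hs : s = (∑ i ∈ (Finset.Icc 1 l).filter (fun i => c i ≤ c 1), c i) - 2 * c 1) :
    ∀ g : MvPolynomial (Pos c n) ℂ,
      (∀ ξ : Pos c n → ℂ, (Xpt c n ξ ^ (r + 1)).rank = s + c 1 - 1 →
          MvPolynomial.eval ξ g = 0)
        ↔ g ∈ Ideal.span {BSf c l n m hm} := by
  intro g
  have hc1 : 0 < c 1 := hc 1 (Finset.mem_Icc.2 ⟨le_rfl, one_le_two.trans hl⟩)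
  have h := isBlockIndexing_blk hl hc1 hcl hn hm
  rw [Ideal.mem_span_singleton]
  constructor
  · intro hg
    obtain ⟨ξ₀, hξ₀, hrank₀⟩ := exists_eval_BSf_eq_zero_le_rank h hr hs
    obtain ⟨q, hqξ₀, hq⟩ := exists_eval_ne_zero_rank_le (genX c n ^ (r + 1)) ξ₀
    simp only [← RingHom.mapMatrix_apply, map_pow] at hq
    simp only [RingHom.mapMatrix_apply, map_eval_genX] at hq
    refine dvd_of_forall_eval_eq_zero (irreducible_BSf h hcne).prime hξ₀ hqξ₀
      fun ξ hξ hqξ => hg ξ ?_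
    have hlt := (eval_BSf_eq_zero_iff h hr hs ξ).1 hξ
    have hle := hq ξ hqξ
    omega
  · rintro ⟨u, rfl⟩ ξ hξ
    rw [map_mul, (eval_BSf_eq_zero_iff h hr hs ξ).2 (by omega), zero_mul]

end
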